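/- arXiv:1001.3859 — 3 statements merged into one kernel-verified Lean document; each statement's English description precedes it below -/
import Mathlib

section
/- Strict monotonicity of Algorithm II: assume m ≥ 3, each x_i = (1, z_iᵀ)ᵀ with z_i ∈ ℝ^{m−1}, and X has full rank m. If w, w' ∈ Ω₊ are related by the Algorithm II update, i.e. w'_i = w_i·(x_iᵀ M(w)^{-1} x_i − 1)/(m − 1) for every i, then det M(w) ≤ det M(w'), with equality only if w' = w. -/
open Matrix Filter

/-- The information matrix `M(w) = ∑ i, w_i x_i x_iᵀ`. -/
noncomputable def Mmat {n m : ℕ} (x : Fin n → Fin m → ℝ) (w : Fin n → ℝ) :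
    Matrix (Fin m) (Fin m) ℝ :=
  ∑ i, w i • Matrix.vecMulVec (x i) (x i)

lemma quad_trace {ι : Type*} [Fintype ι] [DecidableEq ι] (G : Matrix ι ι ℝ) (a : ι → ℝ) :
    (G * vecMulVec a a).trace = a ⬝ᵥ G *ᵥ a := by
  rw [mul_vecMulVec, trace_vecMulVec, dotProduct_comm]

lemma det_le_of_trace_one {ι : Type*} [Fintype ι] [DecidableEq ι] (C : Matrix ι ι ℝ)
    (hC : C.PosDef) (ht : C.trace ≤ Fintype.card ι) : C.det ≤ 1 ∧ (C.det = 1 → C = 1) := by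
  have hl := hC.eigenvalues_pos
  have htr : C.trace = ∑ i, hC.1.eigenvalues i := by
    simpa using hC.1.trace_eq_sum_eigenvalues
  have hd : C.det = ∏ i, hC.1.eigenvalues i := by
    simpa using hC.1.det_eq_prod_eigenvalues
  have hlog : Real.log C.det = ∑ i, Real.log (hC.1.eigenvalues i) := by
    rw [hd, Real.log_prod (fun i _ => (hl i).ne')]
  have hle : ∀ i, Real.log (hC.1.eigenvalues i) ≤ hC.1.eigenvalues i - 1 :=
    fun i => Real.log_le_sub_one_of_pos (hl i)
  have hs : ∑ i, (hC.1.eigenvalues i - 1) ≤ 0 := by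
    rw [Finset.sum_sub_distrib, ← htr]; simpa using ht
  have hs2 : ∑ i, Real.log (hC.1.eigenvalues i) ≤ ∑ i, (hC.1.eigenvalues i - 1) :=
    Finset.sum_le_sum fun i _ => hle i
  refine ⟨?_, fun h1 => ?_⟩
  · rw [← Real.log_nonpos_iff hC.det_pos.le, hlog]; linarith
  · have h0 : ∑ i, Real.log (hC.1.eigenvalues i) = ∑ i, (hC.1.eigenvalues i - 1) := by
      rw [h1, Real.log_one] at hlog; linarith
    have h2 := (Finset.sum_eq_sum_iff_of_le fun i _ => hle i).1 h0
    have h3 : hC.1.eigenvalues = fun _ => 1 := by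
      funext i
      by_contra hne
      exact absurd (h2 i (Finset.mem_univ _)) (Real.log_lt_sub_one_of_pos (hl i) hne).ne
    have := hC.1.spectral_theorem
    rw [h3] at this
    rw [this]
    have e1 : (diagonal ((RCLike.ofReal : ℝ → ℝ) ∘ fun _ : ι => (1:ℝ))) = 1 := by
      ext i j; simp [diagonal, one_apply]
    rw [e1, map_one]

lemma det_le_of_trace {ι : Type*} [Fintype ι] [DecidableEq ι] (B V : Matrix ι ι ℝ)
    (hB : B.PosDef) (hV : V.PosDef) (ht : (B⁻¹ * V).trace ≤ Fintype.card ι) :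
    V.det ≤ B.det ∧ (V.det = B.det → V = B) := by
  obtain ⟨S, hS⟩ : ∃ S : Matrix ι ι ℝ, B = Sᵀ * S := by
    open scoped MatrixOrder in
    obtain ⟨S, hS⟩ :=
      (CStarAlgebra.nonneg_iff_eq_star_mul_self (a := B)).1 hB.posSemidef.nonneg
    exact ⟨S, by simpa [star_eq_conjTranspose] using hS⟩
  have hdB : B.det = S.det * S.det := by rw [hS, det_mul, det_transpose]
  have hBpos := hB.det_pos
  have hSd : S.det ≠ 0 := by
    intro h; rw [h] at hdB; simp at hdB; linarith
  have hSu : IsUnit S.det := isUnit_iff_ne_zero.2 hSd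
  have hSu' : IsUnit S := (isUnit_iff_isUnit_det S).2 hSu
  have hTu : IsUnit Sᵀ.det := by rwa [det_transpose]
  have hCp : (S⁻¹ᵀ * V * S⁻¹).PosDef := by
    have := hV.conjTranspose_mul_mul_same (B := S⁻¹)
      (mulVec_injective_of_isUnit ((isUnit_nonsing_inv_iff).2 hSu'))
    simpa using this
  have htr : (S⁻¹ᵀ * V * S⁻¹).trace = (B⁻¹ * V).trace := by
    rw [trace_mul_comm, ← Matrix.mul_assoc, hS, Matrix.mul_inv_rev, transpose_nonsing_inv]
  have hdet : (S⁻¹ᵀ * V * S⁻¹).det * B.det = V.det := by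
    rw [hdB, det_mul, det_mul, det_transpose, det_nonsing_inv, Ring.inverse_eq_inv']
    field_simp
  have hback : Sᵀ * (S⁻¹ᵀ * V * S⁻¹) * S = V := by
    rw [transpose_nonsing_inv, Matrix.mul_assoc, Matrix.mul_assoc, Matrix.nonsing_inv_mul _ hSu,
      Matrix.mul_one, Matrix.mul_nonsing_inv_cancel_left _ _ hTu]
  obtain ⟨h1, h2⟩ := det_le_of_trace_one _ hCp (htr ▸ ht)
  refine ⟨by nlinarith, fun h => ?_⟩
  have h3 := h2 (by rw [h] at hdet; exact (mul_eq_right₀ hBpos.ne').1 hdet)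
  rw [← hback, h3, hS, Matrix.mul_one]

lemma exists_orth {m : ℕ} (hm : 3 ≤ m) (a b : Fin m → ℝ) :
    ∃ v : Fin m → ℝ, v ≠ 0 ∧ v ⬝ᵥ a = 0 ∧ v ⬝ᵥ b = 0 := by
  have := LinearMap.ker_ne_bot_of_finrank_lt (f := (Matrix.of ![a, b]).mulVecLin) (by simp; omega)
  obtain ⟨v, hv, h0⟩ := (Submodule.ne_bot_iff _).1 this
  refine ⟨v, h0, ?_, ?_⟩
  · have := congrFun (LinearMap.mem_ker.1 hv) 0
    simpa [mulVec, dotProduct_comm] using this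
  · have := congrFun (LinearMap.mem_ker.1 hv) 1
    simpa [mulVec, dotProduct_comm] using this

lemma sum_quad {n : ℕ} {ι : Type*} [Fintype ι] [DecidableEq ι] (G : Matrix ι ι ℝ)
    (w : Fin n → ℝ) (y : Fin n → ι → ℝ) (e : ι → ℝ) (V : Matrix ι ι ℝ)
    (hV : V = ∑ i, w i • vecMulVec (y i) (y i) + vecMulVec e e) :
    ∑ i, w i * (y i ⬝ᵥ G *ᵥ y i) = (G * V).trace - e ⬝ᵥ G *ᵥ e := by
  rw [hV, Matrix.mul_add, trace_add, quad_trace, Matrix.mul_sum, trace_sum]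
  simp [quad_trace]

lemma core {n m : ℕ} (hm : 3 ≤ m) (w w' : Fin n → ℝ) (y : Fin n → Fin m → ℝ) (e u : Fin m → ℝ)
    (V B : Matrix (Fin m) (Fin m) ℝ)
    (hV : V = ∑ i, w i • vecMulVec (y i) (y i) + vecMulVec e e)
    (hB : B = ∑ i, w' i • vecMulVec (y i - u) (y i - u) + vecMulVec e e)
    (hVp : V.PosDef) (hBp : B.PosDef) (hVe : V *ᵥ e = e) (hBe : B *ᵥ e = e) (hee : e ⬝ᵥ e = 1)
    (hw0 : ∀ i, 0 ≤ w i) (hw1 : ∑ i, w i = 1) (hwy : ∑ i, w i • y i = 0)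
    (hupd : ∀ i, w' i = w i * (y i ⬝ᵥ V⁻¹ *ᵥ y i) / ((m : ℝ) - 1)) :
    V.det ≤ B.det ∧ (V.det = B.det → w' = w) := by
  have hm' : (3 : ℝ) ≤ m := by exact_mod_cast hm
  obtain ⟨p, hp⟩ : ∃ p : ℝ, p = (m : ℝ) - 1 := ⟨_, rfl⟩
  rw [← hp] at hupd
  have hp0 : 0 < p := by linarith
  have hVu : IsUnit V.det := isUnit_iff_ne_zero.2 hVp.det_pos.ne'
  have hBu : IsUnit B.det := isUnit_iff_ne_zero.2 hBp.det_pos.ne'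
  have hVt : Vᵀ = V := by simpa using hVp.1.eq
  have hBt : Bᵀ = B := by simpa using hBp.1.eq
  have hBit : B⁻¹ᵀ = B⁻¹ := by rw [transpose_nonsing_inv, hBt]
  have hVit : V⁻¹ᵀ = V⁻¹ := by rw [transpose_nonsing_inv, hVt]
  have hBie : B⁻¹ *ᵥ e = e := by
    conv_lhs => rw [← hBe]
    rw [mulVec_mulVec, Matrix.nonsing_inv_mul _ hBu, one_mulVec]
  have hVip : V⁻¹.PosDef := hVp.inv
  obtain ⟨r, hr⟩ : ∃ r : Fin n → ℝ, ∀ i, r i = (y i ⬝ᵥ V⁻¹ *ᵥ y i) / p := ⟨_, fun _ => rfl⟩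
  have hw'r : ∀ i, w' i = w i * r i := fun i => by rw [hupd, hr]; ring
  -- the vectors whose norms measure the defect
  obtain ⟨c, hc⟩ : ∃ c : Fin n → Fin m → ℝ, ∀ i, c i = B⁻¹ *ᵥ (y i - u) := ⟨_, fun _ => rfl⟩
  have symm : ∀ (G : Matrix (Fin m) (Fin m) ℝ), Gᵀ = G → ∀ a b, a ⬝ᵥ G *ᵥ b = b ⬝ᵥ G *ᵥ a := by
    intro G hG a b
    rw [dotProduct_mulVec, ← mulVec_transpose, hG, dotProduct_comm]
  obtain ⟨t, ht⟩ : ∃ t : Fin n → ℝ, ∀ i, t i = p - 2 * (y i ⬝ᵥ c i) + r i * (c i ⬝ᵥ V *ᵥ c i) :=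
    ⟨_, fun _ => rfl⟩
  have hsq : ∀ i, r i * t i = (y i - r i • V *ᵥ c i) ⬝ᵥ V⁻¹ *ᵥ (y i - r i • V *ᵥ c i) := by
    intro i
    have hq : y i ⬝ᵥ V⁻¹ *ᵥ y i = r i * p := by rw [hr]; field_simp
    have h1 : V⁻¹ *ᵥ (V *ᵥ c i) = c i := by
      rw [mulVec_mulVec, Matrix.nonsing_inv_mul _ hVu, one_mulVec]
    have h2 : (V *ᵥ c i) ⬝ᵥ V⁻¹ *ᵥ y i = y i ⬝ᵥ c i := by
      rw [symm _ hVit, h1]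
    have h3 : (V *ᵥ c i) ⬝ᵥ c i = c i ⬝ᵥ V *ᵥ c i := dotProduct_comm _ _
    simp only [mulVec_sub, mulVec_smul, sub_dotProduct, dotProduct_sub, smul_dotProduct,
      dotProduct_smul, smul_eq_mul, h1, h2, h3, hq]
    rw [ht]; ring
  have hrnn : ∀ i, 0 ≤ r i := fun i => by
    rw [hr]
    have := hVip.posSemidef.dotProduct_mulVec_nonneg (y i)
    simp at this; positivity
  have hr0 : ∀ i, r i = 0 → y i = 0 := by
    intro i h
    by_contra hne
    have := hVip.dotProduct_mulVec_pos hne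
    simp only [star_trivial] at this
    have h4 := hr i
    have : 0 < (y i ⬝ᵥ V⁻¹ *ᵥ y i) / p := by positivity
    linarith
  have ht0 : ∀ i, r i = 0 → t i = p := by
    intro i h
    rw [ht, h, hr0 i h]; simp
  have htnn : ∀ i, 0 ≤ t i := by
    intro i
    rcases (hrnn i).eq_or_lt with h | h
    · rw [ht0 i h.symm]; exact hp0.le
    · have h5 := hVip.posSemidef.dotProduct_mulVec_nonneg (y i - r i • V *ᵥ c i)
      simp only [star_trivial] at h5
      rw [← hsq] at h5
      exact nonneg_of_mul_nonneg_right h5 h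
  have hid : ∑ i, w i * t i = m - (B⁻¹ * V).trace := by
    have h1 : ∑ i, w i * (y i ⬝ᵥ B⁻¹ *ᵥ y i) = (B⁻¹ * V).trace - 1 := by
      rw [sum_quad B⁻¹ w y e V hV, hBie, hee]
    have h2 : ∑ i, w' i * (c i ⬝ᵥ V *ᵥ c i) = (B⁻¹ * V).trace - 1 := by
      have := sum_quad (B⁻¹ * V * B⁻¹) w' (fun i => y i - u) e B hB
      rw [Matrix.mul_assoc _ _ B, Matrix.nonsing_inv_mul _ hBu, Matrix.mul_one] at this
      have h6 : ∀ a, a ⬝ᵥ (B⁻¹ * V * B⁻¹) *ᵥ a = (B⁻¹ *ᵥ a) ⬝ᵥ V *ᵥ (B⁻¹ *ᵥ a) := by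
        intro a
        rw [← mulVec_mulVec, ← mulVec_mulVec, symm _ hBit, dotProduct_comm]
      simp only [h6, hBie, hVe, hee] at this
      rw [← this]
      exact Finset.sum_congr rfl fun i _ => by rw [hc]
    have h3 : ∑ i, w i * (y i ⬝ᵥ c i) = (B⁻¹ * V).trace - 1 := by
      rw [← h1]
      have h7 : ∑ i, w i * (y i ⬝ᵥ B⁻¹ *ᵥ u) = 0 := by
        have : (∑ i, w i • y i) ⬝ᵥ B⁻¹ *ᵥ u = 0 := by rw [hwy]; simp
        rw [sum_dotProduct] at this
        simpa using this
      have : ∀ i, w i * (y i ⬝ᵥ c i) = w i * (y i ⬝ᵥ B⁻¹ *ᵥ y i) - w i * (y i ⬝ᵥ B⁻¹ *ᵥ u) := by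
        intro i; rw [hc, mulVec_sub, dotProduct_sub]; ring
      simp only [this, Finset.sum_sub_distrib, h7, sub_zero]
    have : ∀ i, w i * t i = p * w i - 2 * (w i * (y i ⬝ᵥ c i)) + w' i * (c i ⬝ᵥ V *ᵥ c i) := by
      intro i; rw [ht, hw'r]; ring
    simp only [this, Finset.sum_add_distrib, Finset.sum_sub_distrib, ← Finset.mul_sum, h2, h3, hw1]
    rw [hp]; ring
  have hnn : 0 ≤ ∑ i, w i * t i := Finset.sum_nonneg fun i _ => mul_nonneg (hw0 i) (htnn i)
  obtain ⟨k1, k2⟩ := det_le_of_trace B V hBp hVp (by simp; linarith)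
  refine ⟨k1, fun hdet => ?_⟩
  have hVB := k2 hdet
  have hz : ∑ i, w i * t i = 0 := by
    rw [hid, hVB, Matrix.nonsing_inv_mul _ hBu]; simp
  have hz' := (Finset.sum_eq_zero_iff_of_nonneg fun i _ => mul_nonneg (hw0 i) (htnn i)).1 hz
  have hkey : ∀ i, w i ≠ 0 → r i ≠ 0 ∧ y i = r i • (y i - u) := by
    intro i hi
    have hti : t i = 0 := (mul_eq_zero.1 (hz' i (Finset.mem_univ _))).resolve_left hi
    refine ⟨fun h => hp0.ne' (by rw [← ht0 i h, hti]), ?_⟩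
    have h8 := hsq i
    rw [hti, mul_zero] at h8
    have h9 : y i - r i • V *ᵥ c i = 0 := by
      by_contra hne
      have := hVip.dotProduct_mulVec_pos hne
      simp only [star_trivial] at this
      linarith
    rw [hc, hVB, mulVec_mulVec, Matrix.mul_nonsing_inv _ hBu, one_mulVec] at h9
    exact sub_eq_zero.1 h9
  by_cases hu : u = 0
  · funext i
    by_cases hi : w i = 0
    · rw [hw'r, hi]; simp
    · obtain ⟨h1, h2⟩ := hkey i hi
      have hy : y i ≠ 0 := by
        intro h0; apply h1; rw [hr, h0]; simp
      have : (r i - 1) • y i = 0 := by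
        rw [sub_smul, one_smul, sub_eq_zero]; rw [hu, sub_zero] at h2; exact h2.symm
      have := (smul_eq_zero.1 this).resolve_right hy
      rw [hw'r, sub_eq_zero.1 this, mul_one]
  · exfalso
    obtain ⟨v, hv, hvu, hve⟩ := exists_orth hm u e
    have hvy : ∀ i, w i ≠ 0 → v ⬝ᵥ y i = 0 := by
      intro i hi
      obtain ⟨h1, h2⟩ := hkey i hi
      have h3 := congrArg (fun a => v ⬝ᵥ a) h2
      simp only [dotProduct_smul, dotProduct_sub, hvu, sub_zero, smul_eq_mul] at h3
      by_contra hne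
      have h4 : r i = 1 := by
        have : (r i - 1) * (v ⬝ᵥ y i) = 0 := by linarith
        linarith [(mul_eq_zero.1 this).resolve_right hne]
      rw [h4, one_smul] at h2
      exact hu (by have h7 := sub_eq_zero.2 h2; simpa using h7)
    have h5 := hVp.dotProduct_mulVec_pos hv
    have h6 : V *ᵥ v = 0 := by
      rw [hV, add_mulVec, sum_mulVec]
      have : ∀ i, (w i • vecMulVec (y i) (y i)) *ᵥ v = 0 := by
        intro i
        by_cases hi : w i = 0
        · simp [hi]
        · rw [smul_mulVec, vecMulVec_mulVec, dotProduct_comm, hvy i hi]; simp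
      simp only [this, vecMulVec_mulVec, dotProduct_comm e v, hve]; simp
    rw [h6] at h5; simp at h5

lemma shear {n m : ℕ} (x : Fin n → Fin m → ℝ) (w : Fin n → ℝ) (e μ : Fin m → ℝ)
    (hee : e ⬝ᵥ e = 1) (hxe : ∀ i, x i ⬝ᵥ e = 1) (hw1 : ∑ i, w i = 1) (hμ : μ = ∑ i, w i • x i)
    (hM : (Mmat x w).PosDef) :
    ∃ V : Matrix (Fin m) (Fin m) ℝ,
      V = ∑ i, w i • vecMulVec (x i - μ) (x i - μ) + vecMulVec e e ∧ V.PosDef ∧ V *ᵥ e = e ∧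
      V.det = (Mmat x w).det ∧
      ∀ i, (x i ⬝ᵥ (Mmat x w)⁻¹ *ᵥ x i) - 1 = (x i - μ) ⬝ᵥ V⁻¹ *ᵥ (x i - μ) := by
  have hμe : μ ⬝ᵥ e = 1 := by
    rw [hμ, sum_dotProduct]; simp [hxe, hw1]
  obtain ⟨T, hT⟩ : ∃ T : Matrix (Fin m) (Fin m) ℝ, T = 1 - vecMulVec (μ - e) e := ⟨_, rfl⟩
  have hTd : T.det = 1 := by
    rw [hT, vecMulVec_eq Unit, det_one_sub_mul_comm]
    simp [det_unique, Matrix.mul_apply, replicateRow, replicateCol]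
    have : e ⬝ᵥ (μ - e) = 0 := by rw [dotProduct_sub, dotProduct_comm, hμe, hee, sub_self]
    simpa [dotProduct] using this
  have hTx : ∀ i, T *ᵥ x i = (x i - μ) + e := by
    intro i
    rw [hT, sub_mulVec, one_mulVec, vecMulVec_mulVec, dotProduct_comm, hxe]
    simp
    abel
  have hzero : ∑ i, w i • (x i - μ) = 0 := by
    simp only [smul_sub, Finset.sum_sub_distrib, ← Finset.sum_smul, hw1, ← hμ]; simp
  have hye : ∀ i, (x i - μ) ⬝ᵥ e = 0 := fun i => by rw [sub_dotProduct, hxe, hμe, sub_self]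
  have hVeq : T * Mmat x w * Tᵀ =
      ∑ i, w i • vecMulVec (x i - μ) (x i - μ) + vecMulVec e e := by
    have h1 : ∀ i, w i • vecMulVec (x i - μ + e) (x i - μ + e) =
        w i • vecMulVec (x i - μ) (x i - μ) + vecMulVec (w i • (x i - μ)) e
          + vecMulVec e (w i • (x i - μ)) + w i • vecMulVec e e := by
      intro i; ext a b; simp [vecMulVec_apply]; ring
    have h2 : ∑ i, vecMulVec (w i • (x i - μ)) e = 0 := by
      have : vecMulVec (∑ i, w i • (x i - μ)) e = 0 := by rw [hzero]; simp
      rw [← this]; ext a b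
      simp [vecMulVec_apply, Matrix.sum_apply, Finset.sum_mul, mul_assoc]
    have h3 : ∑ i, vecMulVec e (w i • (x i - μ)) = 0 := by
      have : vecMulVec e (∑ i, w i • (x i - μ)) = 0 := by rw [hzero]; simp
      rw [← this]; ext a b
      simp [vecMulVec_apply, Matrix.sum_apply, Finset.mul_sum, mul_left_comm]
    rw [Mmat, Matrix.mul_sum, Matrix.sum_mul]
    simp only [Matrix.mul_smul, Matrix.smul_mul, mul_vecMulVec, vecMulVec_mul, vecMul_transpose,
      hTx, h1, Finset.sum_add_distrib, h2, h3, ← Finset.sum_smul, hw1]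
    simp
  have hTu : IsUnit T.det := by rw [hTd]; exact isUnit_one
  have hTtu : IsUnit Tᵀ.det := by rwa [det_transpose]
  have hMu : IsUnit (Mmat x w).det := isUnit_iff_ne_zero.2 hM.det_pos.ne'
  have hVe : (T * Mmat x w * Tᵀ) *ᵥ e = e := by
    rw [hVeq, add_mulVec, sum_mulVec]
    simp [smul_mulVec, vecMulVec_mulVec, hye, hee]
  have hVd : (T * Mmat x w * Tᵀ).det = (Mmat x w).det := by
    rw [det_mul, det_mul, det_transpose, hTd]; ring
  have hVp : (T * Mmat x w * Tᵀ).PosDef := by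
    have := hM.conjTranspose_mul_mul_same (B := Tᵀ)
      (mulVec_injective_of_isUnit ((isUnit_iff_isUnit_det _).2 hTtu))
    simpa using this
  refine ⟨_, hVeq, ?_⟩
  refine ⟨hVp, hVe, hVd, fun i => ?_⟩
  obtain ⟨V, hV⟩ : ∃ V, V = T * Mmat x w * Tᵀ := ⟨_, rfl⟩
  rw [← hV] at hVe hVp hVd ⊢
  have hVu : IsUnit V.det := isUnit_iff_ne_zero.2 hVp.det_pos.ne'
  have hVie : V⁻¹ *ᵥ e = e := by
    conv_lhs => rw [← hVe]
    rw [mulVec_mulVec, Matrix.nonsing_inv_mul _ hVu, one_mulVec]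
  have hVt : Vᵀ = V := by simpa using hVp.1.eq
  have hVit : V⁻¹ᵀ = V⁻¹ := by rw [transpose_nonsing_inv, hVt]
  have hMi : (Mmat x w)⁻¹ = Tᵀ * V⁻¹ * T := by
    rw [hV, Matrix.mul_inv_rev, Matrix.mul_inv_rev]
    rw [Matrix.mul_nonsing_inv_cancel_left _ _ hTtu, Matrix.mul_assoc,
      Matrix.nonsing_inv_mul _ hTu, Matrix.mul_one]
  have h5 : x i ⬝ᵥ (Mmat x w)⁻¹ *ᵥ x i = (T *ᵥ x i) ⬝ᵥ V⁻¹ *ᵥ (T *ᵥ x i) := by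
    rw [hMi, ← mulVec_mulVec, ← mulVec_mulVec, dotProduct_mulVec, vecMul_transpose]
  have h6 : e ⬝ᵥ V⁻¹ *ᵥ (x i - μ) = 0 := by
    rw [dotProduct_mulVec, ← mulVec_transpose, hVit, hVie, dotProduct_comm, hye]
  rw [h5, hTx, mulVec_add, hVie, add_dotProduct, dotProduct_add, dotProduct_add, h6, hye, hee]
  ring

/-- Strict monotonicity of Titterington's Algorithm II: if `m ≥ 3`, each design point has
first coordinate 1, the design matrix has full rank `m`, and `w, w' ∈ Ω₊` are related by the
Algorithm II update, then `det M(w) ≤ det M(w')`, with equality only if `w' = w`. -/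
theorem stmt_0 {n m : ℕ} (hm : 3 ≤ m) (hnm : m ≤ n)
    (x : Fin n → Fin m → ℝ)
    (hx1 : ∀ i, x i ⟨0, by omega⟩ = 1)
    (hrank : (Matrix.of x).rank = m)
    (w w' : Fin n → ℝ)
    (hw0 : ∀ i, 0 ≤ w i) (hw1 : ∑ i, w i = 1) (hMw : (Mmat x w).PosDef)
    (hw'0 : ∀ i, 0 ≤ w' i) (hw'1 : ∑ i, w' i = 1) (hMw' : (Mmat x w').PosDef)
    (hupd : ∀ i, w' i = w i * ((x i ⬝ᵥ (Mmat x w)⁻¹ *ᵥ x i) - 1) / ((m : ℝ) - 1)) :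
    (Mmat x w).det ≤ (Mmat x w').det ∧
      ((Mmat x w).det = (Mmat x w').det → w' = w) := by
  obtain ⟨e, he⟩ : ∃ e : Fin m → ℝ, e = Pi.single ⟨0, by omega⟩ 1 := ⟨_, rfl⟩
  have hee : e ⬝ᵥ e = 1 := by rw [he]; simp
  have hxe : ∀ i, x i ⬝ᵥ e = 1 := fun i => by rw [he]; simp [hx1]
  obtain ⟨μ, hμ⟩ : ∃ μ, μ = ∑ i, w i • x i := ⟨_, rfl⟩
  obtain ⟨μ', hμ'⟩ : ∃ μ', μ' = ∑ i, w' i • x i := ⟨_, rfl⟩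
  obtain ⟨V, hV, hVp, hVe, hVd, hVq⟩ := shear x w e μ hee hxe hw1 hμ hMw
  obtain ⟨B, hB, hBp, hBe, hBd, -⟩ := shear x w' e μ' hee hxe hw'1 hμ' hMw'
  have hzero : ∑ i, w i • (x i - μ) = 0 := by
    simp only [smul_sub, Finset.sum_sub_distrib, ← Finset.sum_smul, hw1, ← hμ]; simp
  have := core hm w w' (fun i => x i - μ) e (μ' - μ) V B hV (by simpa using hB) hVp hBp hVe hBe hee
    hw0 hw1 hzero (fun i => by rw [hupd, hVq])
  rwa [hVd, hBd] at this
end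

section
/- Convergence of Algorithm II: assume m ≥ 3, each x_i = (1, z_iᵀ)ᵀ with z_i ∈ ℝ^{m−1}, and X has full rank m. Let w^(0) ∈ Ω and let w^(t) be the sequence generated by the Algorithm II update w_i^(t) = w_i^(t−1)·(x_iᵀ M(w^(t−1))^{-1} x_i − 1)/(m − 1). Then every limit point of the sequence w^(t) is a global maximizer of det M(w) over Ω₊, and det M(w^(t)) increases monotonically to sup_{w ∈ Ω₊} det M(w) as t → ∞. -/
open Matrix Filter

/-- `Ω₊`: the set of weight vectors in the closed simplex whose information matrix is
positive definite. -/
def OmegaPlus {n m : ℕ} (x : Fin n → Fin m → ℝ) : Set (Fin n → ℝ) :=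
  {w | (∀ i, 0 ≤ w i) ∧ ∑ i, w i = 1 ∧ (Mmat x w).PosDef}

lemma amgm {m : ℕ} (A B : Matrix (Fin m) (Fin m) ℝ) (hA : A.PosDef) (hB : B.PosSemidef)
    (h : (A * B).trace ≤ m) : A.det * B.det ≤ 1 := by
  obtain ⟨C, hC⟩ : ∃ C : Matrix (Fin m) (Fin m) ℝ, A = Cᴴ * C := by
    open scoped MatrixOrder in
    exact CStarAlgebra.nonneg_iff_eq_star_mul_self.mp hA.posSemidef.nonneg
  have hP : (C * B * Cᴴ).PosSemidef := hB.mul_mul_conjTranspose_same C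
  have htr : (C * B * Cᴴ).trace = (A * B).trace := by
    rw [Matrix.trace_mul_comm, hC, ← Matrix.mul_assoc]
  have hdet : (C * B * Cᴴ).det = A.det * B.det := by
    rw [hC]; simp only [det_mul]; ring
  rw [← hdet, hP.isHermitian.det_eq_prod_eigenvalues]
  rw [← htr, hP.isHermitian.trace_eq_sum_eigenvalues] at h
  simp only [RCLike.ofReal_real_eq_id, id] at h ⊢
  calc _ ≤ ∏ i, Real.exp (hP.isHermitian.eigenvalues i - 1) := by
        apply Finset.prod_le_prod
        · intro i _; exact hP.eigenvalues_nonneg i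
        · intro i _; have := Real.add_one_le_exp (hP.isHermitian.eigenvalues i - 1); linarith
    _ = Real.exp (∑ i, (hP.isHermitian.eigenvalues i - 1)) := (Real.exp_sum _ _).symm
    _ ≤ 1 := by
        rw [Real.exp_le_one_iff]; simpa [Finset.sum_sub_distrib] using h

section
variable {n m : ℕ} (x : Fin n → Fin m → ℝ) (w : Fin n → ℝ)

lemma Mmat_transpose : (Mmat x w)ᵀ = Mmat x w := by
  simp [Mmat, Matrix.transpose_sum, transpose_vecMulVec]

lemma Mmat_mulVec (q : Fin m → ℝ) : Mmat x w *ᵥ q = ∑ i, (w i * (x i ⬝ᵥ q)) • x i := by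
  simp [Mmat, Matrix.sum_mulVec, smul_mulVec, vecMulVec_mulVec, smul_smul]

lemma Mmat_quad (p q : Fin m → ℝ) :
    p ⬝ᵥ Mmat x w *ᵥ q = ∑ i, w i * (x i ⬝ᵥ p) * (x i ⬝ᵥ q) := by
  rw [Mmat_mulVec, dotProduct_sum]
  refine Finset.sum_congr rfl fun i _ => ?_
  rw [dotProduct_smul, smul_eq_mul, dotProduct_comm p]; ring

lemma Mmat_psd (hw : ∀ i, 0 ≤ w i) : (Mmat x w).PosSemidef := by
  refine .of_dotProduct_mulVec_nonneg ?_ fun q => ?_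
  · simp [IsHermitian, conjTranspose_eq_transpose_of_trivial, Mmat_transpose]
  · rw [star_trivial, Mmat_quad]
    exact Finset.sum_nonneg fun i _ => by rw [mul_assoc]; exact mul_nonneg (hw i) (mul_self_nonneg _)

lemma trace_mul_Mmat (Q : Matrix (Fin m) (Fin m) ℝ) :
    (Q * Mmat x w).trace = ∑ i, w i * (x i ⬝ᵥ Q *ᵥ x i) := by
  simp [Mmat, Matrix.mul_sum, trace_sum, mul_vecMulVec, trace_vecMulVec, dotProduct_comm]

lemma Mmat_pd_of_det (hw : ∀ i, 0 ≤ w i) (h : (Mmat x w).det ≠ 0) : (Mmat x w).PosDef := by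
  rw [(Mmat_psd x w hw).posDef_iff_isUnit, isUnit_iff_isUnit_det]
  exact h.isUnit

/-- symmetry -/
lemma symm_swap (S : Matrix (Fin m) (Fin m) ℝ) (hS : Sᵀ = S) (p q : Fin m → ℝ) :
    p ⬝ᵥ S *ᵥ q = q ⬝ᵥ S *ᵥ p := by
  rw [dotProduct_comm, ← vecMul_transpose, hS, ← dotProduct_mulVec]

lemma det_update {S : Matrix (Fin m) (Fin m) ℝ} (u v : Fin m → ℝ) (hS : IsUnit S.det) :
   (S + vecMulVec u v).det = S.det * (1 + v ⬝ᵥ S⁻¹ *ᵥ u) := by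
  have := det_add_replicateCol_mul_replicateRow (ι := Unit) hS u v
  rw [← vecMulVec_eq] at this
  rw [this, det_unique (n := Unit), Matrix.mul_assoc, ← replicateCol_mulVec]
  simp [Matrix.mul_apply, dotProduct]
end


lemma wsum_le {n : ℕ} (v f b : Fin n → ℝ) (hv : ∀ i, 0 ≤ v i) (h : ∀ i, 0 < v i → b i ≤ f i) :
    ∑ i, v i * b i ≤ ∑ i, v i * f i := by
  refine Finset.sum_le_sum fun i _ => ?_
  rcases (hv i).eq_or_lt with h0 | h0
  · simp [← h0]
  · exact mul_le_mul_of_nonneg_left (h i h0) h0.le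

lemma wsum_lt {n : ℕ} (v f b : Fin n → ℝ) (hv : ∀ i, 0 ≤ v i) (h : ∀ i, 0 < v i → b i ≤ f i)
    (j : Fin n) (hj : 0 < v j) (hjs : b j < f j) :
    ∑ i, v i * b i < ∑ i, v i * f i := by
  refine Finset.sum_lt_sum (fun i _ => ?_) ⟨j, Finset.mem_univ _, mul_lt_mul_of_pos_left hjs hj⟩
  rcases (hv i).eq_or_lt with h0 | h0
  · simp [← h0]
  · exact mul_le_mul_of_nonneg_left (h i h0) h0.le

lemma chord (r : ℝ) (hr0 : 0 ≤ r) (hr1 : r < 1) : ∃ l : ℝ,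
    (∀ s, |s| ≤ r → Real.log (1 - r ^ 2) + l * s ≤ 2 * Real.log (1 + s)) ∧
    (∀ s, |s| < r → Real.log (1 - r ^ 2) + l * s < 2 * Real.log (1 + s)) := by
  rcases hr0.eq_or_lt with h0 | h0
  · subst h0
    refine ⟨0, fun s hs => ?_, fun s hs => ?_⟩
    · have : s = 0 := by simpa using hs
      simp [this]
    · exact absurd hs (not_lt.2 (abs_nonneg s))
  · have hlog : Real.log (1 - r ^ 2) = Real.log (1 + r) + Real.log (1 - r) := by
      rw [← Real.log_mul (by linarith) (by linarith)]; congr 1; ring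
    refine ⟨(Real.log (1 + r) - Real.log (1 - r)) / r, fun s hs => ?_, fun s hs => ?_⟩
    · rw [abs_le] at hs
      have hA : 0 ≤ (1 + s / r) / 2 := by
        have : -1 ≤ s / r := by rw [le_div_iff₀ h0]; linarith
        linarith
      have hB : 0 ≤ (1 - s / r) / 2 := by
        have : s / r ≤ 1 := by rw [div_le_iff₀ h0]; linarith
        linarith
      have := strictConcaveOn_log_Ioi.concaveOn.2 (x := 1 + r) (y := 1 - r)
        (by simp; linarith) (by simp; linarith) hA hB (by ring)
      simp only [smul_eq_mul] at this
      have e : (1 + s / r) / 2 * (1 + r) + (1 - s / r) / 2 * (1 - r) = 1 + s := by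
        field_simp; ring
      rw [e] at this
      have e2 : Real.log (1 - r ^ 2) + (Real.log (1 + r) - Real.log (1 - r)) / r * s =
        2 * ((1 + s / r) / 2 * Real.log (1 + r) + (1 - s / r) / 2 * Real.log (1 - r)) := by
        rw [hlog]; field_simp; ring
      rw [e2]; linarith
    · rw [abs_lt] at hs
      have hA : 0 < (1 + s / r) / 2 := by
        have : -1 < s / r := by rw [lt_div_iff₀ h0]; linarith
        linarith
      have hB : 0 < (1 - s / r) / 2 := by
        have : s / r < 1 := by rw [div_lt_iff₀ h0]; linarith
        linarith
      have := strictConcaveOn_log_Ioi.2 (x := 1 + r) (y := 1 - r)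
        (by simp; linarith) (by simp; linarith) (by intro h; linarith) hA hB (by ring)
      simp only [smul_eq_mul] at this
      have e : (1 + s / r) / 2 * (1 + r) + (1 - s / r) / 2 * (1 - r) = 1 + s := by
        field_simp; ring
      rw [e] at this
      have e2 : Real.log (1 - r ^ 2) + (Real.log (1 + r) - Real.log (1 - r)) / r * s =
        2 * ((1 + s / r) / 2 * Real.log (1 + r) + (1 - s / r) / 2 * Real.log (1 - r)) := by
        rw [hlog]; field_simp; ring
      rw [e2]; linarith

lemma scalar_main {n : ℕ} (v T δ s : Fin n → ℝ) (k ρ : ℝ) (hk : 2 ≤ k)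
    (hv : ∀ i, 0 ≤ v i) (hv1 : ∑ i, v i = 1)
    (hT : ∀ i, 0 < v i → 0 < T i)
    (hCS : ∀ i, 0 < v i → (k + s i) ^ 2 ≤ δ i * T i)
    (hs : ∑ i, v i * s i = 0) (hs2 : ∑ i, v i * s i ^ 2 = ρ)
    (hsb : ∀ i, 0 < v i → s i ^ 2 ≤ k * ρ)
    (hTs : ∑ i, v i * T i ≤ k - ρ) :
    (∀ i, 0 < v i → 0 < δ i) ∧ 0 ≤ ∑ i, v i * Real.log (δ i / k) ∧
    (∑ i, v i * Real.log (δ i / k) ≤ 0 → ∑ i, v i * δ i ≤ k) := by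
  have hk0 : 0 < k := by linarith
  obtain ⟨j, hj⟩ : ∃ j, 0 < v j := by
    by_contra hcon
    push Not at hcon
    have : ∑ i, v i ≤ 0 := Finset.sum_nonpos fun i _ => hcon i
    linarith
  have hρ0 : 0 ≤ ρ := by
    rw [← hs2]; exact Finset.sum_nonneg fun i _ => mul_nonneg (hv i) (sq_nonneg _)
  have hρk : ρ < k := by
    have := wsum_lt v T (fun _ => 0) hv (fun i hi => (hT i hi).le) j hj (hT j hj)
    simp at this
    linarith
  have hks : ∀ i, 0 < v i → 0 < k + s i := by
    intro i hi
    have h1 : s i ^ 2 < k ^ 2 := by nlinarith [hsb i hi]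
    have := abs_lt_of_sq_lt_sq h1 hk0.le
    rw [abs_lt] at this; linarith
  have hδ : ∀ i, 0 < v i → 0 < δ i := by
    intro i hi
    have h1 : 0 < δ i * T i := lt_of_lt_of_le (by have := hks i hi; positivity) (hCS i hi)
    exact pos_of_mul_pos_left h1 (hT i hi).le
  have hkρ : 0 < k - ρ := by linarith
  -- log bound
  have hlog : ∀ i, 0 < v i → 2 * Real.log (1 + s i / k) - Real.log (1 - ρ / k)
      - Real.log (T i / (k - ρ)) ≤ Real.log (δ i / k) := by
    intro i hi
    have h1 : 0 < 1 + s i / k := by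
      have := div_pos (hks i hi) hk0
      rwa [add_div, div_self hk0.ne'] at this
    have h2 : 0 < 1 - ρ / k := by
      have := div_pos hkρ hk0
      rwa [sub_div, div_self hk0.ne'] at this
    have h3 := hT i hi
    have h4 := hδ i hi
    have : Real.log ((1 + s i / k) ^ 2) ≤
        Real.log (δ i / k * (T i / (k - ρ)) * (1 - ρ / k)) := by
      apply Real.log_le_log (by positivity)
      have : δ i / k * (T i / (k - ρ)) * (1 - ρ / k) = δ i * T i / k ^ 2 := by
        field_simp
      rw [this, le_div_iff₀ (by positivity)]
      have : (1 + s i / k) ^ 2 * k ^ 2 = (k + s i) ^ 2 := by field_simp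
      rw [this]; exact hCS i hi
    rw [Real.log_mul (by positivity) h2.ne', Real.log_mul (by positivity) (by positivity),
      Real.log_pow] at this
    push_cast at this
    linarith
  have hlT : ∀ i, 0 < v i → Real.log (T i / (k - ρ)) ≤ T i / (k - ρ) - 1 := fun i hi =>
    Real.log_le_sub_one_of_pos (div_pos (hT i hi) hkρ)
  have hr1 : √(ρ / k) < 1 := by
    rw [Real.sqrt_lt' one_pos, div_lt_iff₀ hk0]; linarith
  have hrsq : √(ρ / k) ^ 2 = ρ / k := Real.sq_sqrt (by positivity)
  obtain ⟨l, hl1, hl2⟩ := chord (√(ρ / k)) (Real.sqrt_nonneg _) hr1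
  rw [hrsq] at hl1 hl2
  have hσ : ∀ i, 0 < v i → |s i / k| ≤ √(ρ / k) := by
    intro i hi
    apply Real.abs_le_sqrt
    rw [div_pow, div_le_div_iff₀ (by positivity) hk0]
    nlinarith [hsb i hi]
  have hbd : ∀ i, 0 < v i → l * (s i / k) - (T i / (k - ρ) - 1) ≤ Real.log (δ i / k) := by
    intro i hi
    linarith [hlog i hi, hlT i hi, hl1 _ (hσ i hi)]
  have hsum : 0 ≤ ∑ i, v i * (l * (s i / k) - (T i / (k - ρ) - 1)) := by
    have : ∑ i, v i * (l * (s i / k) - (T i / (k - ρ) - 1)) =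
        l / k * (∑ i, v i * s i) - (∑ i, v i * T i) / (k - ρ) + ∑ i, v i := by
      rw [Finset.mul_sum, Finset.sum_div, ← Finset.sum_sub_distrib, ← Finset.sum_add_distrib]
      refine Finset.sum_congr rfl fun i _ => ?_
      ring
    rw [this, hs, hv1]
    have : (∑ i, v i * T i) / (k - ρ) ≤ 1 := by rw [div_le_one hkρ]; exact hTs
    linarith
  refine ⟨hδ, hsum.trans (wsum_le v _ _ hv hbd), fun hI => ?_⟩
  have hstrict : ∀ i, 0 < v i →
      ¬ (l * (s i / k) - (T i / (k - ρ) - 1) < Real.log (δ i / k)) := by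
    intro i hi hlt
    have := wsum_lt v _ _ hv hbd i hi hlt
    linarith
  -- ρ = 0
  have hρ : ρ = 0 := by
    by_contra hne
    have hpos : 0 < ρ := lt_of_le_of_ne hρ0 (Ne.symm hne)
    have hall : ∀ i, 0 < v i → k * ρ ≤ s i ^ 2 := by
      intro i hi
      by_contra hlt
      push Not at hlt
      have : |s i / k| < √(ρ / k) := by
        apply Real.lt_sqrt_of_sq_lt
        rw [sq_abs, div_pow, div_lt_div_iff₀ (by positivity) hk0]
        nlinarith
      exact hstrict i hi (by linarith [hlog i hi, hlT i hi, hl2 _ this])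
    have := wsum_le v _ _ hv hall
    rw [← Finset.sum_mul, hv1, hs2] at this
    nlinarith
  subst hρ
  have hs0 : ∀ i, 0 < v i → s i = 0 := by
    intro i hi
    have := hsb i hi
    rw [mul_zero] at this
    exact pow_eq_zero_iff (two_ne_zero) |>.1 (le_antisymm this (sq_nonneg _))
  have hTk : ∀ i, 0 < v i → T i = k := by
    intro i hi
    by_contra hne
    have h1 : Real.log (T i / (k - 0)) < T i / (k - 0) - 1 := by
      apply Real.log_lt_sub_one_of_pos (div_pos (hT i hi) hkρ)
      rw [sub_zero, Ne, div_eq_one_iff_eq hk0.ne']; exact hne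
    exact hstrict i hi (by linarith [hlog i hi, hl1 _ (hσ i hi)])
  have hδk : ∀ i, 0 < v i → δ i ≤ k := by
    intro i hi
    by_contra hlt
    push Not at hlt
    apply hstrict i hi
    rw [hs0 i hi, hTk i hi]
    have : 0 < Real.log (δ i / k) := Real.log_pos (by rw [lt_div_iff₀ hk0]; linarith)
    simpa [hk0.ne'] using this
  have := wsum_le v (fun _ => k) δ hv hδk
  rwa [← Finset.sum_mul, hv1, one_mul] at this

lemma psd_cs {m : ℕ} (S : Matrix (Fin m) (Fin m) ℝ) (hS : S.PosSemidef) (p q : Fin m → ℝ) :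
    (p ⬝ᵥ S *ᵥ q) ^ 2 ≤ (p ⬝ᵥ S *ᵥ p) * (q ⬝ᵥ S *ᵥ q) := by
  have hsym : Sᵀ = S := by
    have := hS.isHermitian
    rwa [IsHermitian, conjTranspose_eq_transpose_of_trivial] at this
  have h : ∀ t : ℝ, 0 ≤ (q ⬝ᵥ S *ᵥ q) * (t * t) + (2 * (p ⬝ᵥ S *ᵥ q)) * t + p ⬝ᵥ S *ᵥ p := by
    intro t
    have := hS.dotProduct_mulVec_nonneg (p + t • q)
    simp only [star_trivial, mulVec_add, mulVec_smul, add_dotProduct, dotProduct_add,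
      smul_dotProduct, dotProduct_smul, smul_eq_mul] at this
    rw [symm_swap S hsym q p] at this
    linarith
  have := discrim_le_zero h
  rw [discrim] at this
  nlinarith

/-- Auxiliary centered vector. -/
noncomputable def gv {n m : ℕ} (x : Fin n → Fin m → ℝ) (w : Fin n → ℝ) (a : Fin m → ℝ)
    (i : Fin n) : Fin m → ℝ := (Mmat x w)⁻¹ *ᵥ x i - a

/-- Centered variance function. -/
noncomputable def del {n m : ℕ} (x : Fin n → Fin m → ℝ) (w : Fin n → ℝ) (i : Fin n) : ℝ :=
  (x i ⬝ᵥ (Mmat x w)⁻¹ *ᵥ x i) - 1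

section
variable {n m : ℕ} {x : Fin n → Fin m → ℝ} {w : Fin n → ℝ} {a : Fin m → ℝ}

lemma om_unit (hw : w ∈ OmegaPlus x) : IsUnit (Mmat x w).det := hw.2.2.det_pos.ne'.isUnit

lemma inv_symm (x : Fin n → Fin m → ℝ) (w : Fin n → ℝ) : ((Mmat x w)⁻¹)ᵀ = (Mmat x w)⁻¹ := by
  rw [transpose_nonsing_inv, Mmat_transpose]

lemma M_gv (hw : w ∈ OmegaPlus x) (i : Fin n) :
    Mmat x w *ᵥ gv x w a i = x i - Mmat x w *ᵥ a := by
  rw [gv, mulVec_sub, mulVec_mulVec, mul_nonsing_inv _ (om_unit hw), one_mulVec]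

lemma aMa (ha : ∀ i, x i ⬝ᵥ a = 1) (hw : w ∈ OmegaPlus x) : a ⬝ᵥ Mmat x w *ᵥ a = 1 := by
  rw [Mmat_quad]; simp [ha, hw.2.1]

lemma aMg (ha : ∀ i, x i ⬝ᵥ a = 1) (hw : w ∈ OmegaPlus x) (i : Fin n) :
    a ⬝ᵥ Mmat x w *ᵥ gv x w a i = 0 := by
  rw [M_gv hw, dotProduct_sub, aMa ha hw, dotProduct_comm, ha, sub_self]

lemma xg (ha : ∀ i, x i ⬝ᵥ a = 1) (i : Fin n) : x i ⬝ᵥ gv x w a i = del x w i := by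
  rw [gv, dotProduct_sub, ha, del]

lemma xg_swap (ha : ∀ i, x i ⬝ᵥ a = 1) (i j : Fin n) :
    x i ⬝ᵥ gv x w a j = x j ⬝ᵥ gv x w a i := by
  rw [gv, gv, dotProduct_sub, dotProduct_sub, ha, ha, symm_swap _ (inv_symm x w)]

lemma gMg (ha : ∀ i, x i ⬝ᵥ a = 1) (hw : w ∈ OmegaPlus x) (i : Fin n) :
    gv x w a i ⬝ᵥ Mmat x w *ᵥ gv x w a i = del x w i := by
  rw [M_gv hw, dotProduct_sub, dotProduct_comm, xg ha, symm_swap _ (Mmat_transpose x w),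
    aMg ha hw, sub_zero]

lemma del_nonneg (ha : ∀ i, x i ⬝ᵥ a = 1) (hw : w ∈ OmegaPlus x) (i : Fin n) :
    0 ≤ del x w i := by
  rw [← gMg ha hw]
  simpa using hw.2.2.posSemidef.dotProduct_mulVec_nonneg (gv x w a i)

lemma sum_del (hw : w ∈ OmegaPlus x) : ∑ i, w i * del x w i = m - 1 := by
  have h := trace_mul_Mmat x w (Mmat x w)⁻¹
  rw [nonsing_inv_mul _ (om_unit hw), trace_one, Fintype.card_fin] at h
  simp only [del, mul_sub, mul_one, Finset.sum_sub_distrib, hw.2.1, ← h]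

lemma Ma (ha : ∀ i, x i ⬝ᵥ a = 1) : Mmat x w *ᵥ a = ∑ i, w i • x i := by
  rw [Mmat_mulVec]; simp [ha]

lemma sum_gv (ha : ∀ i, x i ⬝ᵥ a = 1) (hw : w ∈ OmegaPlus x) : ∑ i, w i • gv x w a i = 0 := by
  have h : ∑ i, w i • gv x w a i = (Mmat x w)⁻¹ *ᵥ (∑ i, w i • x i) - (∑ i, w i) • a := by
    simp only [gv, smul_sub, Finset.sum_sub_distrib, Finset.sum_smul, mulVec_sum, mulVec_smul]
  rw [h, ← Ma ha, mulVec_mulVec, nonsing_inv_mul _ (om_unit hw), one_mulVec, hw.2.1, one_smul,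
    sub_self]

/-- One step of the algorithm stays in `Ω₊` and increases the determinant. -/
lemma step (hm : 3 ≤ m) (ha : ∀ i, x i ⬝ᵥ a = 1) (hw : w ∈ OmegaPlus x) (w' : Fin n → ℝ)
    (hw' : ∀ i, w' i = w i * del x w i / ((m : ℝ) - 1)) :
    w' ∈ OmegaPlus x ∧ (Mmat x w).det ≤ (Mmat x w').det := by
  have hm' : (3 : ℝ) ≤ m := by exact_mod_cast hm
  have hk : (0 : ℝ) < (m : ℝ) - 1 := by linarith
  have hnn : ∀ i, 0 ≤ w' i := fun i => by
    rw [hw']; exact div_nonneg (mul_nonneg (hw.1 i) (del_nonneg ha hw i)) hk.le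
  have hs1 : ∑ i, w' i = 1 := by
    simp only [hw', ← Finset.sum_div, sum_del hw]
    exact div_self hk.ne'
  have hwd : ∀ i, w i * del x w i = ((m : ℝ) - 1) * w' i := fun i => by
    rw [hw']; field_simp
  set al : Fin n → Fin m → ℝ := fun i => w' i • a + w i • gv x w a i with hal
  set M := Mmat x w with hM
  set M' := Mmat x w' with hM'
  have hMpsd := hw.2.2.posSemidef
  have hq : ∀ i, al i ⬝ᵥ M *ᵥ al i = w' i * (w' i + ((m : ℝ) - 1) * w i) := by
    intro i
    simp only [hal, mulVec_add, mulVec_smul, add_dotProduct, dotProduct_add,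
      smul_dotProduct, dotProduct_smul, smul_eq_mul]
    rw [aMa ha hw, symm_swap M (Mmat_transpose x w) (gv x w a i) a, aMg ha hw, gMg ha hw]
    linear_combination (w i) * hwd i
  have hal0 : ∀ i, w' i = 0 → al i = 0 := by
    intro i hi
    by_contra hne
    have := hw.2.2.dotProduct_mulVec_pos hne
    rw [star_trivial, hq, hi, zero_mul] at this
    exact lt_irrefl _ this
  set G : Matrix (Fin m) (Fin m) ℝ := ∑ i, vecMulVec (al i) (x i) with hG
  have hGe : G = 1 + vecMulVec a (M' *ᵥ a - M *ᵥ a) := by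
    have h1 : ∑ i, w i • vecMulVec (M⁻¹ *ᵥ x i) (x i) = 1 := by
      have h0 : ∀ N : Matrix (Fin m) (Fin m) ℝ,
          N * M = ∑ i, w i • vecMulVec (N *ᵥ x i) (x i) := by
        intro N
        rw [hM, Mmat, Matrix.mul_sum]
        refine Finset.sum_congr rfl fun i _ => ?_
        rw [Matrix.mul_smul, mul_vecMulVec]
      rw [← h0, nonsing_inv_mul _ (om_unit hw)]
    have h2 : ∀ u : Fin n → ℝ, vecMulVec a (∑ i, u i • x i) = ∑ i, u i • vecMulVec a (x i) := by
      intro u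
      ext p q
      simp [vecMulVec_apply, Finset.sum_apply, Matrix.sum_apply, Finset.mul_sum]
      refine Finset.sum_congr rfl fun i _ => by ring
    rw [hM, hM', Ma ha, Ma ha, ← h1, vecMulVec_sub, h2, h2, hG, ← Finset.sum_sub_distrib,
      ← Finset.sum_add_distrib]
    refine Finset.sum_congr rfl fun i _ => ?_
    ext p q
    simp [hal, gv, vecMulVec_apply]
    ring
  have hGdet : G.det = 1 := by
    rw [hGe, det_update a _ (by simp)]
    simp only [det_one, inv_one, one_mulVec, one_mul]
    rw [dotProduct_comm, dotProduct_sub, aMa ha hw]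
    have : a ⬝ᵥ M' *ᵥ a = 1 := by rw [hM', Mmat_quad]; simp [ha, hs1]
    rw [this]; ring
  have hpd : M'.PosDef := by
    have hpsd := Mmat_psd x w' hnn
    refine .of_dotProduct_mulVec_pos hpsd.isHermitian fun q hq0 => ?_
    refine lt_of_le_of_ne (hpsd.dotProduct_mulVec_nonneg q) fun h0 => hq0 ?_
    rw [star_trivial, Mmat_quad] at h0
    have h1 := (Finset.sum_eq_zero_iff_of_nonneg (fun i _ => by
      rw [mul_assoc]; exact mul_nonneg (hnn i) (mul_self_nonneg _))).1 h0.symm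
    apply eq_zero_of_mulVec_eq_zero (M := G) (by rw [hGdet]; exact one_ne_zero)
    rw [hG, Matrix.sum_mulVec]
    refine Finset.sum_eq_zero fun i hi => ?_
    rw [vecMulVec_mulVec]
    have h2 := h1 i hi
    rw [mul_assoc, mul_eq_zero, mul_self_eq_zero] at h2
    rcases h2 with h2 | h2
    · rw [hal0 i h2, smul_zero]
    · rw [h2]; simp
  refine ⟨⟨hnn, hs1, hpd⟩, ?_⟩
  set K := G * M'⁻¹ with hK
  have hu' : IsUnit M'.det := hpd.det_pos.ne'.isUnit
  have hKM : K * M' = G := by rw [hK, Matrix.mul_assoc, nonsing_inv_mul _ hu', Matrix.mul_one]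
  have hMT : Mᵀ = M := Mmat_transpose x w
  -- pointwise
  have hpt : ∀ i, 2 * (al i ⬝ᵥ M *ᵥ (K *ᵥ x i)) ≤ (w' i + ((m : ℝ) - 1) * w i) +
      w' i * ((K *ᵥ x i) ⬝ᵥ M *ᵥ (K *ᵥ x i)) := by
    intro i
    have hKn : 0 ≤ (K *ᵥ x i) ⬝ᵥ M *ᵥ (K *ᵥ x i) := by
      simpa using hMpsd.dotProduct_mulVec_nonneg (K *ᵥ x i)
    rcases (hnn i).eq_or_lt with h0 | h0
    · rw [hal0 i h0.symm, ← h0]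
      simp only [zero_dotProduct, mul_zero, zero_mul, zero_add, add_zero]
      exact mul_nonneg hk.le (hw.1 i)
    · have := hMpsd.dotProduct_mulVec_nonneg (al i - w' i • (K *ᵥ x i))
      simp only [star_trivial, mulVec_sub, mulVec_smul, sub_dotProduct, dotProduct_sub,
        smul_dotProduct, dotProduct_smul, smul_eq_mul] at this
      rw [symm_swap M hMT (K *ᵥ x i) (al i), hq] at this
      have h2 : 0 ≤ w' i * ((w' i + ((m : ℝ) - 1) * w i) - 2 * (al i ⬝ᵥ M *ᵥ (K *ᵥ x i)) +
        w' i * ((K *ᵥ x i) ⬝ᵥ M *ᵥ (K *ᵥ x i))) := by linarith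
      have := nonneg_of_mul_nonneg_right h2 h0
      linarith
  have hsum := Finset.sum_le_sum fun i (_ : i ∈ Finset.univ) => hpt i
  have e1 : ∑ i, (al i ⬝ᵥ M *ᵥ (K *ᵥ x i)) = (M * (K * Gᵀ)).trace := by
    rw [← Matrix.mul_assoc, hG, Matrix.transpose_sum, Matrix.mul_sum, trace_sum]
    refine Finset.sum_congr rfl fun i _ => ?_
    rw [transpose_vecMulVec, mul_vecMulVec, trace_vecMulVec, dotProduct_comm, mulVec_mulVec]
  have e2 : ∑ i, w' i * ((K *ᵥ x i) ⬝ᵥ M *ᵥ (K *ᵥ x i)) = (M * (K * Gᵀ)).trace := by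
    have h1 := trace_mul_Mmat x w' (Kᵀ * M * K)
    rw [← hM', Matrix.mul_assoc, hKM] at h1
    have h2 : (Kᵀ * M * G).trace = (M * (K * Gᵀ)).trace := by
      rw [← trace_transpose, transpose_mul, transpose_mul, transpose_transpose, hMT,
        trace_mul_comm, Matrix.mul_assoc]
    rw [← h2, h1]
    refine Finset.sum_congr rfl fun i _ => ?_
    have h3 : ∀ (L : Matrix (Fin m) (Fin m) ℝ) (u : Fin m → ℝ),
        u ⬝ᵥ (Lᵀ * M * L) *ᵥ u = (L *ᵥ u) ⬝ᵥ M *ᵥ (L *ᵥ u) := by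
      intro L u
      rw [← mulVec_mulVec, ← mulVec_mulVec, dotProduct_mulVec u Lᵀ, vecMul_transpose]
    rw [h3]
  rw [Finset.sum_add_distrib, Finset.sum_add_distrib, ← Finset.mul_sum, ← Finset.mul_sum, e1, e2,
    hs1, hw.2.1] at hsum
  have hKG : (K * Gᵀ).PosSemidef := by
    have := hpd.inv.posSemidef.mul_mul_conjTranspose_same G
    rwa [conjTranspose_eq_transpose_of_trivial] at this
  have hfin := amgm M (K * Gᵀ) hw.2.2 hKG (by linarith)
  rw [det_mul, det_transpose, hK, det_mul, hGdet, det_nonsing_inv, Ring.inverse_eq_inv', one_mul,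
    mul_one, ← div_eq_mul_inv, div_le_one hpd.det_pos] at hfin
  exact hfin

/-- Key inequality. -/
lemma key {v : Fin n → ℝ} (hm : 3 ≤ m) (ha : ∀ i, x i ⬝ᵥ a = 1) (hw : w ∈ OmegaPlus x)
    (hv : v ∈ OmegaPlus x) (hvle : ∀ i, del x v i ≤ (m : ℝ) - 1)
    (hveq : ∀ i, 0 < v i → del x v i = (m : ℝ) - 1) :
    (∀ i, 0 < v i → 0 < del x w i) ∧ 0 ≤ ∑ i, v i * Real.log (del x w i / ((m : ℝ) - 1)) ∧
    (∑ i, v i * Real.log (del x w i / ((m : ℝ) - 1)) ≤ 0 →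
      (Mmat x v).det ≤ (Mmat x w).det) := by
  have hm' : (3 : ℝ) ≤ m := by exact_mod_cast hm
  set M := Mmat x w with hM
  set V := Mmat x v with hV
  have hMT : Mᵀ = M := Mmat_transpose x w
  have hVT : Vᵀ = V := Mmat_transpose x v
  set g := gv x v a with hg
  set s : Fin n → ℝ := fun i => -(a ⬝ᵥ M *ᵥ g i) with hs
  set q : Fin n → Fin m → ℝ := fun i => g i + s i • a with hqd
  set e : Fin m → ℝ := V⁻¹ *ᵥ (M *ᵥ a) - a with he
  have hVe : V *ᵥ e = M *ᵥ a - V *ᵥ a := by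
    rw [he, mulVec_sub, mulVec_mulVec, mul_nonsing_inv _ (om_unit hv), one_mulVec]
  have haVe : a ⬝ᵥ V *ᵥ e = 0 := by
    rw [hVe, dotProduct_sub, aMa ha hw, aMa ha hv, sub_self]
  have hsx : ∀ i, s i = -(x i ⬝ᵥ e) := by
    intro i
    simp only [hs, he, hg, gv]
    rw [symm_swap M hMT, sub_dotProduct, aMa ha hw, dotProduct_sub, ha,
      dotProduct_comm, symm_swap _ (inv_symm x v)]
  clear_value e
  have hsg : ∀ i, s i = -(g i ⬝ᵥ V *ᵥ e) := by
    intro i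
    rw [hsx, symm_swap V hVT, M_gv hv, dotProduct_sub, symm_swap V hVT, haVe, sub_zero,
      dotProduct_comm]
  have hT : ∀ i, q i ⬝ᵥ M *ᵥ q i = g i ⬝ᵥ M *ᵥ g i - s i ^ 2 := by
    intro i
    simp only [hqd, mulVec_add, mulVec_smul, add_dotProduct, dotProduct_add,
      smul_dotProduct, dotProduct_smul, smul_eq_mul]
    rw [aMa ha hw, symm_swap M hMT (g i) a]
    have : a ⬝ᵥ M *ᵥ g i = - s i := by simp [hs]
    rw [this]; ring
  have main := scalar_main v (fun i => q i ⬝ᵥ M *ᵥ q i) (del x w) s ((m : ℝ) - 1)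
    (∑ i, v i * s i ^ 2) (by linarith) hv.1 hv.2.1 ?_ ?_ ?_ rfl ?_ ?_
  · refine ⟨main.1, main.2.1, fun h => ?_⟩
    have h1 := main.2.2 h
    have h2 : (M⁻¹ * V).trace ≤ m := by
      rw [hV, trace_mul_Mmat]
      have : ∑ i, v i * (x i ⬝ᵥ M⁻¹ *ᵥ x i) = ∑ i, v i * del x w i + ∑ i, v i := by
        rw [← Finset.sum_add_distrib]
        refine Finset.sum_congr rfl fun i _ => ?_
        rw [del]; ring
      rw [this, hv.2.1]; linarith
    have h3 := amgm _ _ hw.2.2.inv hv.2.2.posSemidef h2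
    rwa [det_nonsing_inv, Ring.inverse_eq_inv', inv_mul_le_iff₀ hw.2.2.det_pos, mul_one] at h3
  · intro i hi
    have hne : q i ≠ 0 := by
      intro h0
      have hgi : g i = -(s i • a) := eq_neg_of_add_eq_zero_left h0
      have h1 := gMg ha hv i
      have h2 := aMg ha hv i
      rw [← hV, ← hg] at h1 h2
      have h3 : g i ⬝ᵥ V *ᵥ g i = 0 := by
        conv_lhs => rw [hgi, neg_dotProduct, smul_dotProduct, ← hgi, h2]
        simp
      rw [h3, hveq i hi] at h1
      linarith
    simpa using hw.2.2.dotProduct_mulVec_pos hne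
  · intro i hi
    have h1 := psd_cs M hw.2.2.posSemidef (gv x w a i) (q i)
    rw [gMg ha hw] at h1
    have h2 : gv x w a i ⬝ᵥ M *ᵥ q i = (m : ℝ) - 1 + s i := by
      rw [symm_swap M hMT, M_gv hw, dotProduct_sub]
      simp only [hqd, add_dotProduct, smul_dotProduct, smul_eq_mul]
      rw [aMa ha hw, symm_swap _ (Mmat_transpose x w) (g i) a, dotProduct_comm (g i) (x i), xg ha, hveq i hi,
        dotProduct_comm a, ha]
      simp only [hs]; ring
    rwa [h2] at h1
  · have h1 : ∑ i, v i * s i = -(a ⬝ᵥ M *ᵥ ∑ i, v i • g i) := by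
      simp only [hs, mulVec_sum, mulVec_smul, dotProduct_sum, dotProduct_smul, smul_eq_mul,
        mul_neg, Finset.sum_neg_distrib]
    rw [h1, sum_gv ha hv]; simp
  · intro i hi
    have h1 := psd_cs V hv.2.2.posSemidef (g i) e
    rw [gMg ha hv, hveq i hi] at h1
    have h2 : e ⬝ᵥ V *ᵥ e = ∑ i, v i * s i ^ 2 := by
      rw [hV, Mmat_quad]
      refine Finset.sum_congr rfl fun j _ => ?_
      rw [hsx]; ring
    rwa [h2, ← neg_sq, ← hsg] at h1
  · simp only [hT, mul_sub, Finset.sum_sub_distrib]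
    have h1 : ∑ i, v i * (g i ⬝ᵥ M *ᵥ g i) = ∑ j, w j * del x v j := by
      have h2 : ∀ j, del x v j = ∑ i, v i * (x j ⬝ᵥ g i) * (x j ⬝ᵥ g i) := by
        intro j
        rw [← gMg ha hv, Mmat_quad]
        refine Finset.sum_congr rfl fun i _ => ?_
        rw [xg_swap ha i j]
      simp only [h2, hM, Mmat_quad, Finset.mul_sum]
      rw [Finset.sum_comm]
      refine Finset.sum_congr rfl fun i _ => Finset.sum_congr rfl fun j _ => by ring
    have h3 := wsum_le w (fun _ => (m : ℝ) - 1) (del x v) hw.1 (fun i _ => hvle i)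
    rw [← Finset.sum_mul, hw.2.1, one_mul] at h3
    rw [h1]; linarith

end

lemma Mmat_cont {n m : ℕ} (x : Fin n → Fin m → ℝ) : Continuous (Mmat x) := by
  unfold Mmat
  exact continuous_finsetSum _ fun i _ => (continuous_apply i).smul continuous_const

lemma det_cont {n m : ℕ} (x : Fin n → Fin m → ℝ) : Continuous fun w => (Mmat x w).det :=
  (Mmat_cont x).matrix_det

lemma del_cont {n m : ℕ} (x : Fin n → Fin m → ℝ) (p : Fin n → ℝ) (hp : (Mmat x p).det ≠ 0)
    (i : Fin n) : ContinuousAt (fun w => del x w i) p := by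
  have h1 : ContinuousAt (fun w => (Mmat x w)⁻¹) p := by
    refine ContinuousAt.comp (g := Inv.inv) (f := Mmat x) ?_ (Mmat_cont x).continuousAt
    apply continuousAt_matrix_inv
    rw [Ring.inverse_eq_inv']
    exact continuousAt_inv₀ hp
  have h2 : Continuous fun A : Matrix (Fin m) (Fin m) ℝ => x i ⬝ᵥ A *ᵥ x i - 1 := by
    fun_prop
  exact h2.continuousAt.comp h1

lemma cluster_eq {X : Type*} [TopologicalSpace X] {Y : Type*} [TopologicalSpace Y] [T2Space Y]
    {u : ℕ → X} {p : X} {f : X → Y} {l : Y} (hp : MapClusterPt p atTop u) (hf : ContinuousAt f p)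
    (hl : Tendsto (fun t => f (u t)) atTop (nhds l)) : f p = l := by
  have h := MapClusterPt.tendsto_comp hf hp
  have h2 : (nhds (f p) ⊓ nhds l).NeBot := Filter.NeBot.mono h (inf_le_inf_left _ hl)
  exact eq_of_nhds_neBot h2

lemma exists_opt {n m : ℕ} (hm : 3 ≤ m) {x : Fin n → Fin m → ℝ} {a : Fin m → ℝ}
    (ha : ∀ i, x i ⬝ᵥ a = 1) {w : Fin n → ℝ} (hw : w ∈ OmegaPlus x) :
    ∃ v ∈ OmegaPlus x, (∀ u, (∀ i, 0 ≤ u i) → ∑ i, u i = 1 → (Mmat x u).det ≤ (Mmat x v).det) ∧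
      (∀ i, del x v i ≤ (m : ℝ) - 1) ∧ (∀ i, 0 < v i → del x v i = (m : ℝ) - 1) := by
  obtain ⟨v, hvS, hvmax⟩ := (isCompact_stdSimplex ℝ (Fin n)).exists_isMaxOn
    ⟨w, hw.1, hw.2.1⟩ (det_cont x).continuousOn
  have hmax : ∀ u, (∀ i, 0 ≤ u i) → ∑ i, u i = 1 → (Mmat x u).det ≤ (Mmat x v).det :=
    fun u h1 h2 => hvmax (show u ∈ stdSimplex ℝ (Fin n) from ⟨h1, h2⟩)
  have hdet : 0 < (Mmat x v).det := hw.2.2.det_pos.trans_le (hmax w hw.1 hw.2.1)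
  have hv : v ∈ OmegaPlus x := ⟨hvS.1, hvS.2, Mmat_pd_of_det x v hvS.1 hdet.ne'⟩
  have hm' : (3 : ℝ) ≤ m := by exact_mod_cast hm
  have hle : ∀ i, del x v i ≤ (m : ℝ) - 1 := by
    intro i
    have hd0 := del_nonneg ha hv i
    have hε : ∀ ε : ℝ, 0 < ε → ε < 1 → del x v i - ((m : ℝ) - 1) ≤
        ((m : ℝ) - 1) * del x v i * ε := by
      intro ε h0 h1
      have hu := hmax ((1 - ε) • v + ε • Pi.single i 1) ?_ ?_
      · have e1 : Mmat x ((1 - ε) • v + ε • Pi.single i 1) =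
            (1 - ε) • Mmat x v + vecMulVec (ε • x i) (x i) := by
          simp only [Mmat, Pi.add_apply, Pi.smul_apply, smul_eq_mul, add_smul,
            Finset.sum_add_distrib, Finset.smul_sum, smul_smul, smul_vecMulVec]
          congr 1
          rw [Finset.sum_eq_single i]
          · simp
          · intro b _ hb; simp [hb]
          · simp
        have hpos : 0 < 1 - ε := by linarith
        have hdet2 : ((1 - ε) • Mmat x v).det = (1 - ε) ^ m * (Mmat x v).det := by
          rw [det_smul, Fintype.card_fin]
        have hun : IsUnit ((1 - ε) • Mmat x v).det := by
          rw [hdet2]; exact (by positivity : (1 - ε) ^ m * (Mmat x v).det ≠ 0).isUnit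
        have hinv : ((1 - ε) • Mmat x v)⁻¹ = (1 - ε)⁻¹ • (Mmat x v)⁻¹ := by
          apply inv_eq_right_inv
          rw [smul_mul_smul_comm, mul_inv_cancel₀ hpos.ne', mul_nonsing_inv _ (om_unit hv),
            one_smul]
        rw [e1, det_update _ _ hun, hdet2, hinv] at hu
        simp only [smul_mulVec, mulVec_smul, dotProduct_smul, smul_eq_mul] at hu
        have hd : x i ⬝ᵥ (Mmat x v)⁻¹ *ᵥ x i = del x v i + 1 := by rw [del]; ring
        rw [hd] at hu
        obtain ⟨k, rfl⟩ : ∃ k, m = k + 1 := ⟨m - 1, by omega⟩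
        push_cast at hm' ⊢
        have hu2 : (1 - ε) ^ k * (1 + ε * del x v i) * (Mmat x v).det ≤ 1 * (Mmat x v).det := by
          calc _ = _ := ?_
            _ ≤ _ := hu
            _ = _ := (one_mul _).symm
          field_simp
          ring
        have hu3 := le_of_mul_le_mul_right hu2 hdet
        have hb := one_add_mul_le_pow (a := -ε) (by linarith) k
        have hp : 0 < 1 + ε * del x v i := by positivity
        have hu4 : (1 + (k : ℝ) * -ε) * (1 + ε * del x v i) ≤ 1 := by
          refine le_trans (mul_le_mul_of_nonneg_right ?_ hp.le) hu3
          rwa [sub_eq_add_neg]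
        have hu5 : ε * (del x v i - k) ≤ ε * (k * del x v i * ε) := by nlinarith
        have := le_of_mul_le_mul_left hu5 h0
        linarith
      · intro j
        have : (0 : ℝ) ≤ (Pi.single i 1 : Fin n → ℝ) j := by
          by_cases h : j = i
          · subst h; simp
          · simp [h]
        simp only [Pi.add_apply, Pi.smul_apply, smul_eq_mul]
        have := hv.1 j
        have : 0 ≤ 1 - ε := by linarith
        positivity
      · simp only [Pi.add_apply, Pi.smul_apply, smul_eq_mul, Finset.sum_add_distrib,
          ← Finset.mul_sum, hv.2.1]
        simp
    by_contra hlt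
    push Not at hlt
    set D := del x v i
    set k := (m : ℝ) - 1 with hk
    have hk2 : 2 ≤ k := by linarith
    have hD : 0 < D := by linarith
    have hkD : 0 < 2 * k * D := by positivity
    have h1 := hε ((D - k) / (2 * k * D)) (div_pos (by linarith) hkD)
      (by rw [div_lt_one hkD]; nlinarith)
    have : k * D * ((D - k) / (2 * k * D)) = (D - k) / 2 := by field_simp
    rw [this] at h1
    linarith
  refine ⟨v, hv, hmax, hle, fun i hi => ?_⟩
  by_contra hne
  have := wsum_lt v (fun _ => (m : ℝ) - 1) (del x v) hv.1 (fun j _ => hle j) i hi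
    (lt_of_le_of_ne (hle i) hne)
  rw [sum_del hv, ← Finset.sum_mul, hv.2.1] at this
  linarith

lemma init_pd {n m : ℕ} {x : Fin n → Fin m → ℝ} (hrank : (Matrix.of x).rank = m)
    {w : Fin n → ℝ} (hw : ∀ i, 0 < w i) : (Mmat x w).PosDef := by
  have hpsd := Mmat_psd x w fun i => (hw i).le
  refine .of_dotProduct_mulVec_pos hpsd.isHermitian fun q hq0 => ?_
  refine lt_of_le_of_ne (hpsd.dotProduct_mulVec_nonneg q) fun h0 => hq0 ?_
  rw [star_trivial, Mmat_quad] at h0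
  have h1 := (Finset.sum_eq_zero_iff_of_nonneg (fun i _ => by
    rw [mul_assoc]; exact mul_nonneg (hw i).le (mul_self_nonneg _))).1 h0.symm
  have h2 : (Matrix.of x).mulVecLin q = 0 := by
    ext i
    have := h1 i (Finset.mem_univ i)
    rw [mul_assoc, mul_eq_zero, mul_self_eq_zero] at this
    rcases this with h | h
    · exact absurd h (hw i).ne'
    · exact h
  have h3 := LinearMap.finrank_range_add_finrank_ker (Matrix.of x).mulVecLin
  rw [Matrix.rank] at hrank
  rw [hrank, Module.finrank_fin_fun] at h3
  have h4 : Module.finrank ℝ (LinearMap.ker (Matrix.of x).mulVecLin) = 0 := by omega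
  have h5 := Submodule.finrank_eq_zero.1 h4
  have : q ∈ LinearMap.ker (Matrix.of x).mulVecLin := h2
  rw [h5] at this
  simpa using this

/-- Convergence of Algorithm II: if `m ≥ 3`, each design point has first coordinate 1, the
design matrix has full rank `m`, and `w^(t)` is generated by the Algorithm II update starting
from `w^(0) ∈ Ω`, then every limit point of `w^(t)` is a global maximizer of `det M` over
`Ω₊`, and `det M(w^(t))` increases monotonically to `sup_{v ∈ Ω₊} det M(v)`. -/
theorem stmt_2 {n m : ℕ} (hm : 3 ≤ m) (hnm : m ≤ n)
    (x : Fin n → Fin m → ℝ)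
    (hx1 : ∀ i, x i ⟨0, by omega⟩ = 1)
    (hrank : (Matrix.of x).rank = m)
    (w : ℕ → Fin n → ℝ)
    (hw0pos : ∀ i, 0 < w 0 i) (hw0sum : ∑ i, w 0 i = 1)
    (hupd : ∀ t i, w (t + 1) i =
      w t i * ((x i ⬝ᵥ (Mmat x (w t))⁻¹ *ᵥ x i) - 1) / ((m : ℝ) - 1)) :
    (∀ p : Fin n → ℝ, MapClusterPt p atTop w →
      p ∈ OmegaPlus x ∧ ∀ v ∈ OmegaPlus x, (Mmat x v).det ≤ (Mmat x p).det) ∧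
    Monotone (fun t => (Mmat x (w t)).det) ∧
    Tendsto (fun t => (Mmat x (w t)).det) atTop
      (nhds (sSup ((fun v => (Mmat x v).det) '' OmegaPlus x))) := by
  set a : Fin m → ℝ := Pi.single ⟨0, by omega⟩ 1 with ha_def
  have ha : ∀ i, x i ⬝ᵥ a = 1 := by
    intro i
    rw [ha_def, dotProduct_single_one]
    exact hx1 i
  have hm' : (3 : ℝ) ≤ m := by exact_mod_cast hm
  have hk : (0 : ℝ) < (m : ℝ) - 1 := by linarith
  have hw0 : w 0 ∈ OmegaPlus x := ⟨fun i => (hw0pos i).le, hw0sum, init_pd hrank hw0pos⟩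
  have hwO : ∀ t, w t ∈ OmegaPlus x := by
    intro t
    induction t with
    | zero => exact hw0
    | succ t ih => exact (step hm ha ih (w (t + 1)) (hupd t)).1
  have hmono : Monotone (fun t => (Mmat x (w t)).det) :=
    monotone_nat_of_le_succ fun t => (step hm ha (hwO t) (w (t + 1)) (hupd t)).2
  obtain ⟨v, hv, hmax, hvle, hveq⟩ := exists_opt hm ha hw0
  have hkey := fun (u : Fin n → ℝ) (hu : u ∈ OmegaPlus x) => key hm ha hu hv hvle hveq
  -- support of `v` stays positive
  have hpos : ∀ t i, 0 < v i → 0 < w t i := by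
    intro t
    induction t with
    | zero => exact fun i _ => hw0pos i
    | succ t ih =>
      intro i hi
      rw [hupd]
      exact div_pos (mul_pos (ih i hi) ((hkey _ (hwO t)).1 i hi)) hk
  set L : ℕ → ℝ := fun t => ∑ i, v i * Real.log (w t i) with hL
  set I : (Fin n → ℝ) → ℝ := fun u => ∑ i, v i * Real.log (del x u i / ((m : ℝ) - 1)) with hI
  have hLI : ∀ t, L (t + 1) - L t = I (w t) := by
    intro t
    simp only [hL, hI, ← Finset.sum_sub_distrib]
    refine Finset.sum_congr rfl fun i _ => ?_
    rcases (hv.1 i).eq_or_lt with h0 | h0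
    · simp [← h0]
    · have h1 := (hkey _ (hwO t)).1 i h0
      have h2 : w (t + 1) i = w t i * (del x (w t) i / ((m : ℝ) - 1)) := by
        rw [hupd, del]; ring
      rw [h2, Real.log_mul (hpos t i h0).ne' (div_pos h1 hk).ne']
      ring
  have hLmono : Monotone L := monotone_nat_of_le_succ fun t => by
    have h1 := hLI t
    have h2 : 0 ≤ I (w t) := (hkey _ (hwO t)).2.1
    linarith
  have hLle : ∀ t, L t ≤ 0 := by
    intro t
    refine Finset.sum_nonpos fun i _ => mul_nonpos_of_nonneg_of_nonpos (hv.1 i) ?_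
    refine Real.log_nonpos ((hwO t).1 i) ?_
    rw [← (hwO t).2.1]
    exact Finset.single_le_sum (fun j _ => (hwO t).1 j) (Finset.mem_univ i)
  have hLlim := tendsto_atTop_ciSup hLmono ⟨0, by rintro _ ⟨t, rfl⟩; exact hLle t⟩
  have hIlim : Tendsto (fun t => I (w t)) atTop (nhds 0) := by
    have := (hLlim.comp (tendsto_add_atTop_nat 1)).sub hLlim
    rw [sub_self] at this
    exact this.congr hLI
  have hdetlim := tendsto_atTop_ciSup hmono
    ⟨(Mmat x v).det, by rintro _ ⟨t, rfl⟩; exact hmax _ (hwO t).1 (hwO t).2.1⟩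
  set ℓ := ⨆ t, (Mmat x (w t)).det with hℓ
  have hclus : ∀ p : Fin n → ℝ, MapClusterPt p atTop w →
      p ∈ OmegaPlus x ∧ (Mmat x p).det = ℓ ∧ (Mmat x v).det ≤ (Mmat x p).det := by
    intro p hp
    have hpS : p ∈ stdSimplex ℝ (Fin n) := by
      refine isClosed_iff_clusterPt.1 (isClosed_stdSimplex ℝ (Fin n)) p (ClusterPt.mono hp ?_)
      rw [le_principal_iff, mem_map]
      exact Filter.univ_mem' fun t => ⟨(hwO t).1, (hwO t).2.1⟩
    have hpdet : (Mmat x p).det = ℓ :=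
      cluster_eq (f := fun u => (Mmat x u).det) hp (det_cont x).continuousAt hdetlim
    have hℓ0 : 0 < ℓ := lt_of_lt_of_le hw0.2.2.det_pos (hmono.ge_of_tendsto hdetlim 0)
    have hpne : (Mmat x p).det ≠ 0 := by rw [hpdet]; exact hℓ0.ne'
    have hpO : p ∈ OmegaPlus x := ⟨hpS.1, hpS.2, Mmat_pd_of_det x p hpS.1 hpne⟩
    refine ⟨hpO, hpdet, (hkey p hpO).2.2 (le_of_eq ?_)⟩
    refine cluster_eq (f := I) hp ?_ hIlim
    refine tendsto_finsetSum _ fun i _ => ?_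
    rcases (hv.1 i).eq_or_lt with h0 | h0
    · simp only [← h0, zero_mul]; exact tendsto_const_nhds
    · have hd := (hkey p hpO).1 i h0
      exact tendsto_const_nhds.mul
        ((((del_cont x p hpne i).div_const _).log (div_pos hd hk).ne'))
  refine ⟨fun p hp => ⟨(hclus p hp).1, fun u hu => ?_⟩, hmono, ?_⟩
  · exact (hmax u hu.1 hu.2.1).trans (hclus p hp).2.2
  · obtain ⟨p, -, hp⟩ := (isCompact_stdSimplex ℝ (Fin n)).exists_mapClusterPt (f := atTop) (u := w)
      (by
        rw [le_principal_iff, mem_map]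
        exact Filter.univ_mem' fun t => ⟨(hwO t).1, (hwO t).2.1⟩)
    obtain ⟨hpO, hpl, hpv⟩ := hclus p hp
    have hG : IsGreatest ((fun v => (Mmat x v).det) '' OmegaPlus x) ℓ := by
      refine ⟨⟨p, hpO, hpl⟩, ?_⟩
      rintro _ ⟨u, hu, rfl⟩
      rw [← hpl]
      exact (hmax u hu.1 hu.2.1).trans hpv
    rw [hG.csSup_eq]
    exact hdetlim
end

section
/- Eigenvalue bounds for the matrix rate: assume 0 ≤ α < m, X has full rank m ≥ 2, and w* ∈ Ω is a global maximizer of det M(w) over Ω̄ with all coordinates positive. Then the n×n matrix R(α) (the Jacobian of T_α at w*) is diagonalizable, and every eigenvalue of R(α) lies in the interval [−α/(m − α), 1]. -/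
open Matrix Filter

/-- The multiplicative update map `T_α(w)_i = w_i (x_iᵀ M(w)⁻¹ x_i − α)/(m − α)`. -/
noncomputable def Talg {n m : ℕ} (x : Fin n → Fin m → ℝ) (α : ℝ) (w : Fin n → ℝ) :
    Fin n → ℝ :=
  fun i => w i * ((x i ⬝ᵥ (Mmat x w)⁻¹ *ᵥ x i) - α) / ((m : ℝ) - α)

lemma aux_Mmat_eq {n m : ℕ} (x : Fin n → Fin m → ℝ) (w : Fin n → ℝ) :
    Mmat x w = (Matrix.of x)ᵀ * Matrix.diagonal w * Matrix.of x := by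
  ext a b
  rw [Matrix.mul_apply]
  simp only [Mmat, Matrix.sum_apply, Matrix.smul_apply, Matrix.vecMulVec_apply,
    Matrix.mul_diagonal, Matrix.transpose_apply, Matrix.of_apply, smul_eq_mul]
  exact Finset.sum_congr rfl fun i _ => by ring

lemma aux_posDef {n m : ℕ} (x : Fin n → Fin m → ℝ) (hrank : (Matrix.of x).rank = m)
    (w : Fin n → ℝ) (hpos : ∀ i, 0 < w i) : (Mmat x w).PosDef := by
  rw [aux_Mmat_eq]
  have h1 : (Matrix.diagonal w).PosDef := Matrix.PosDef.diagonal hpos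
  have h2 : Function.Injective (Matrix.of x).mulVec := by
    have h := LinearMap.finrank_range_add_finrank_ker (Matrix.of x).mulVecLin
    have h3 : Module.finrank ℝ (LinearMap.range (Matrix.of x).mulVecLin) = m := hrank
    rw [h3, Module.finrank_fin_fun] at h
    have h4 : Module.finrank ℝ (LinearMap.ker (Matrix.of x).mulVecLin) = 0 := by omega
    have h5 := Submodule.finrank_eq_zero.mp h4
    exact LinearMap.ker_eq_bot.mp h5
  have := h1.conjTranspose_mul_mul_same (B := Matrix.of x) h2
  rwa [Matrix.conjTranspose_eq_transpose_of_trivial] at this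

lemma aux_symm {m : ℕ} {K : Matrix (Fin m) (Fin m) ℝ} (hK : Kᵀ = K) (y z : Fin m → ℝ) :
    y ⬝ᵥ K *ᵥ z = z ⬝ᵥ K *ᵥ y := by
  rw [Matrix.dotProduct_mulVec, ← Matrix.mulVec_transpose, hK, dotProduct_comm]

lemma aux_sm {m : ℕ} {M : Matrix (Fin m) (Fin m) ℝ} (hM : IsUnit M.det) (hK : (M⁻¹)ᵀ = M⁻¹)
    (y z : Fin m → ℝ) (s : ℝ) (hs : 1 + s * (y ⬝ᵥ M⁻¹ *ᵥ y) ≠ 0) :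
    z ⬝ᵥ (M + s • Matrix.vecMulVec y y)⁻¹ *ᵥ z =
      z ⬝ᵥ M⁻¹ *ᵥ z - s / (1 + s * (y ⬝ᵥ M⁻¹ *ᵥ y)) * (z ⬝ᵥ M⁻¹ *ᵥ y) ^ 2 := by
  have hinv : (M + s • Matrix.vecMulVec y y)⁻¹ = M⁻¹ -
      (s / (1 + s * (y ⬝ᵥ M⁻¹ *ᵥ y))) • Matrix.vecMulVec (M⁻¹ *ᵥ y) (M⁻¹ *ᵥ y) := by
    apply Matrix.inv_eq_right_inv
    have e1 : M * M⁻¹ = 1 := Matrix.mul_nonsing_inv M hM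
    have e2 : M * Matrix.vecMulVec (M⁻¹ *ᵥ y) (M⁻¹ *ᵥ y) = Matrix.vecMulVec y (M⁻¹ *ᵥ y) := by
      rw [Matrix.mul_vecMulVec, Matrix.mulVec_mulVec, e1, Matrix.one_mulVec]
    have e3 : Matrix.vecMulVec y y * M⁻¹ = Matrix.vecMulVec y (M⁻¹ *ᵥ y) := by
      rw [Matrix.vecMulVec_mul, ← Matrix.mulVec_transpose, hK]
    have e4 : Matrix.vecMulVec y y * Matrix.vecMulVec (M⁻¹ *ᵥ y) (M⁻¹ *ᵥ y) =
        (y ⬝ᵥ M⁻¹ *ᵥ y) • Matrix.vecMulVec y (M⁻¹ *ᵥ y) := by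
      rw [Matrix.vecMulVec_mul_vecMulVec, Matrix.vecMulVec_smul]
    rw [Matrix.add_mul, Matrix.mul_sub, Matrix.mul_sub, Matrix.mul_smul, Matrix.smul_mul,
      Matrix.smul_mul, Matrix.mul_smul, e1, e2, e3, e4]
    ext a b
    simp only [Matrix.add_apply, Matrix.sub_apply, Matrix.smul_apply, smul_eq_mul]
    field_simp
    ring
  rw [hinv, Matrix.sub_mulVec, dotProduct_sub, Matrix.smul_mulVec, dotProduct_smul,
    Matrix.vecMulVec_mulVec, dotProduct_comm (M⁻¹ *ᵥ y) z]
  simp only [op_smul_eq_smul, dotProduct_smul, smul_eq_mul]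
  ring

lemma aux_det {m : ℕ} {M : Matrix (Fin m) (Fin m) ℝ} (hM : IsUnit M.det)
    (y : Fin m → ℝ) (s : ℝ) :
    (M + s • Matrix.vecMulVec y y).det = M.det * (1 + s * (y ⬝ᵥ M⁻¹ *ᵥ y)) := by
  have h := Matrix.det_add_replicateCol_mul_replicateRow (ι := Unit) hM (s • y) y
  rw [← Matrix.vecMulVec_eq, Matrix.smul_vecMulVec] at h
  rw [h, Matrix.det_unique (n := Unit), Matrix.add_apply, Matrix.one_apply_eq, Matrix.mul_assoc,
    Matrix.mul_apply]
  congr 2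
  simp [Matrix.mul_apply, dotProduct, Matrix.mulVec, Finset.mul_sum]
  refine Finset.sum_congr rfl fun i _ => Finset.sum_congr rfl fun j _ => by ring

lemma aux_sum_g {n m : ℕ} (x : Fin n → Fin m → ℝ) (w : Fin n → ℝ)
    (hM : IsUnit (Mmat x w).det) :
    ∑ i, w i * (x i ⬝ᵥ (Mmat x w)⁻¹ *ᵥ x i) = m := by
  have h : (Mmat x w * (Mmat x w)⁻¹).trace = m := by
    rw [Matrix.mul_nonsing_inv _ hM]; simp
  rw [← h]
  generalize (Mmat x w)⁻¹ = K
  rw [Mmat, Finset.sum_mul, Matrix.trace_sum]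
  refine Finset.sum_congr rfl fun i _ => ?_
  rw [Matrix.smul_mul, Matrix.trace_smul, Matrix.trace_mul_comm, Matrix.mul_vecMulVec,
    Matrix.trace_vecMulVec, dotProduct_comm, smul_eq_mul]

lemma aux_row {n m : ℕ} (x : Fin n → Fin m → ℝ) (w : Fin n → ℝ)
    (hM : IsUnit (Mmat x w).det) (hK : ((Mmat x w)⁻¹)ᵀ = (Mmat x w)⁻¹) (i : Fin n) :
    ∑ j, w j * (x i ⬝ᵥ (Mmat x w)⁻¹ *ᵥ x j) ^ 2 = x i ⬝ᵥ (Mmat x w)⁻¹ *ᵥ x i := by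
  have h : (Mmat x w)⁻¹ *ᵥ x i = (Mmat x w)⁻¹ *ᵥ (Mmat x w *ᵥ ((Mmat x w)⁻¹ *ᵥ x i)) := by
    rw [Matrix.mulVec_mulVec (x i), Matrix.mul_nonsing_inv _ hM, Matrix.one_mulVec]
  rw [h, aux_symm hK]
  conv_rhs => rw [Matrix.mulVec_mulVec, ← Matrix.mulVec_mulVec, dotProduct_comm]
  have h2 : ∀ j, x i ⬝ᵥ (Mmat x w)⁻¹ *ᵥ x j = x j ⬝ᵥ (Mmat x w)⁻¹ *ᵥ x i :=
    fun j => aux_symm hK _ _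
  simp_rw [h2]
  generalize (Mmat x w)⁻¹ *ᵥ x i = u
  rw [Mmat, Matrix.sum_mulVec, dotProduct_sum]
  refine Finset.sum_congr rfl fun j _ => ?_
  rw [Matrix.smul_mulVec, Matrix.vecMulVec_mulVec]
  simp only [op_smul_eq_smul, smul_dotProduct, smul_eq_mul, dotProduct_comm u]
  ring

lemma aux_d_le {n m : ℕ} (hm : 2 ≤ m)
    (x : Fin n → Fin m → ℝ)
    (w : Fin n → ℝ) (hpos : ∀ i, 0 < w i) (hsum : ∑ i, w i = 1)
    (hopt : ∀ v : Fin n → ℝ, (∀ i, 0 ≤ v i) → ∑ i, v i = 1 →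
      (Mmat x v).det ≤ (Mmat x w).det) (hdet : 0 < (Mmat x w).det) (i : Fin n)
    (hd0 : 0 ≤ x i ⬝ᵥ (Mmat x w)⁻¹ *ᵥ x i) :
    x i ⬝ᵥ (Mmat x w)⁻¹ *ᵥ x i ≤ m := by
  have hunit : IsUnit (Mmat x w).det := hdet.ne'.isUnit
  set d := x i ⬝ᵥ (Mmat x w)⁻¹ *ᵥ x i with hd
  obtain ⟨k, rfl⟩ : ∃ k, m = k + 1 := ⟨m - 1, by omega⟩
  have key : ∀ t : ℝ, 0 < t → t < 1 → (1 - t) ^ k * (1 - t + t * d) ≤ 1 := by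
    intro t ht0 ht1
    have h1t : (1 - t) ≠ 0 := by linarith
    have hv := hopt (fun j => (1 - t) * w j + t * (if j = i then 1 else 0)) (by
      intro j
      have := (hpos j).le
      have h1 : 0 ≤ 1 - t := by linarith
      split_ifs <;> positivity) (by
      rw [Finset.sum_add_distrib, ← Finset.mul_sum, ← Finset.mul_sum, hsum]
      simp)
    have hMv : Mmat x (fun j => (1 - t) * w j + t * (if j = i then 1 else 0)) =
        (1 - t) • (Mmat x w + (t / (1 - t)) • Matrix.vecMulVec (x i) (x i)) := by
      rw [smul_add, smul_smul, mul_div_cancel₀ _ h1t]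
      simp only [Mmat, add_smul, Finset.sum_add_distrib, Finset.smul_sum, mul_smul]
      congr 1
      simp
    rw [hMv, Matrix.det_smul, aux_det hunit, ← hd, Fintype.card_fin] at hv
    have e : (1 - t) ^ (k + 1) * ((Mmat x w).det * (1 + t / (1 - t) * d)) =
        (Mmat x w).det * ((1 - t) ^ k * (1 - t + t * d)) := by
      field_simp
      try ring
    rw [e] at hv
    exact le_of_mul_le_mul_left (by linarith) hdet
  by_contra hcon
  push Not at hcon
  push_cast at hcon
  have hk : (1 : ℝ) ≤ k := by
    have : 1 ≤ k := by omega
    exact_mod_cast this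
  -- choose `t` small
  have hA : 0 < k * (d - 1) := by apply mul_pos <;> linarith
  set t : ℝ := min (1 / 2) ((d - (k + 1)) / (2 * (k * (d - 1)))) with ht
  have hε : 0 < d - (k + 1) := by linarith
  have ht0 : 0 < t := by rw [ht]; positivity
  have ht1 : t ≤ 1 / 2 := min_le_left _ _
  have ht2 : t * (k * (d - 1)) ≤ (d - (k + 1)) / 2 := by
    have : t ≤ (d - (k + 1)) / (2 * (k * (d - 1))) := min_le_right _ _
    rw [le_div_iff₀ (by positivity)] at this
    linarith
  have h := key t ht0 (by linarith)
  have hb : 1 + (k : ℝ) * (-t) ≤ (1 + (-t)) ^ k := one_add_mul_le_pow (by linarith) k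
  have h3 : (1 + (k : ℝ) * (-t)) * (1 - t + t * d) ≤ (1 + (-t)) ^ k * (1 - t + t * d) := by
    apply mul_le_mul_of_nonneg_right hb
    have := mul_nonneg ht0.le hd0
    linarith
  rw [← sub_eq_add_neg] at h3
  have h4 : t * ((d - (k + 1)) - t * (k * (d - 1))) ≤ 0 := by
    have h5 := h3.trans h
    rw [← sub_nonpos] at h5
    refine le_trans (le_of_eq ?_) h5
    ring
  have h6 : 0 < t * ((d - (k + 1)) - t * (k * (d - 1))) := mul_pos ht0 (by linarith)
  linarith

lemma aux_d_eq {n m : ℕ} (hm : 2 ≤ m)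
    (x : Fin n → Fin m → ℝ)
    (w : Fin n → ℝ) (hpos : ∀ i, 0 < w i) (hsum : ∑ i, w i = 1)
    (hopt : ∀ v : Fin n → ℝ, (∀ i, 0 ≤ v i) → ∑ i, v i = 1 →
      (Mmat x v).det ≤ (Mmat x w).det) (hP : (Mmat x w).PosDef) (i : Fin n) :
    x i ⬝ᵥ (Mmat x w)⁻¹ *ᵥ x i = m := by
  have hdet := hP.det_pos
  have hle : ∀ j, x j ⬝ᵥ (Mmat x w)⁻¹ *ᵥ x j ≤ m := fun j =>
    aux_d_le hm x w hpos hsum hopt hdet j (by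
      simpa using hP.inv.posSemidef.dotProduct_mulVec_nonneg (x j))
  have hs := aux_sum_g x w hdet.ne'.isUnit
  have hz : ∑ j, w j * (m - x j ⬝ᵥ (Mmat x w)⁻¹ *ᵥ x j) = 0 := by
    simp_rw [mul_sub]
    rw [Finset.sum_sub_distrib, hs, ← Finset.sum_mul, hsum]
    ring
  have := (Finset.sum_eq_zero_iff_of_nonneg (fun j _ =>
    mul_nonneg (hpos j).le (sub_nonneg.mpr (hle j)))).mp hz i (Finset.mem_univ i)
  rcases mul_eq_zero.mp this with h | h
  · exact absurd h (hpos i).ne'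
  · linarith

lemma aux_R {n m : ℕ} (x : Fin n → Fin m → ℝ) (α : ℝ) (hαm : α < m)
    (w : Fin n → ℝ) (hP : (Mmat x w).PosDef)
    (hd : ∀ i, x i ⬝ᵥ (Mmat x w)⁻¹ *ᵥ x i = m)
    (R : Matrix (Fin n) (Fin n) ℝ)
    (hR : HasFDerivAt (Talg x α)
      (LinearMap.toContinuousLinearMap (Matrix.toLin' R)) w) (i j : Fin n) :
    R i j = (if i = j then 1 else 0) -
      w i * (x i ⬝ᵥ (Mmat x w)⁻¹ *ᵥ x j) ^ 2 / (m - α) := by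
  have hunit : IsUnit (Mmat x w).det := hP.det_pos.ne'.isUnit
  have hK : ((Mmat x w)⁻¹)ᵀ = (Mmat x w)⁻¹ := by
    have h := hP.inv.isHermitian.eq
    rwa [Matrix.conjTranspose_eq_transpose_of_trivial] at h
  have hma : (m : ℝ) - α ≠ 0 := by linarith
  have hline : HasDerivAt (fun t : ℝ => w + t • (Pi.single j 1 : Fin n → ℝ))
      (Pi.single j 1) 0 := by
    simpa using ((hasDerivAt_id (0 : ℝ)).smul_const (Pi.single j 1 : Fin n → ℝ)).const_add w
  have h1 : HasDerivAt (fun t : ℝ => Talg x α (w + t • (Pi.single j 1 : Fin n → ℝ)))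
      (R *ᵥ Pi.single j 1) 0 := by
    have hR' : HasFDerivAt (Talg x α) (LinearMap.toContinuousLinearMap (Matrix.toLin' R))
      (w + (0 : ℝ) • (Pi.single j 1 : Fin n → ℝ)) := by simpa using hR
    have := hR'.comp_hasDerivAt (0 : ℝ) hline
    exact this
  have h2 := (hasDerivAt_pi.mp h1) i
  set g := x i ⬝ᵥ (Mmat x w)⁻¹ *ᵥ x j with hg
  have h3 : HasDerivAt (fun t : ℝ => (w i + t * (if i = j then 1 else 0)) *
      (m - t / (1 + t * m) * g ^ 2 - α) / (m - α))
      ((if i = j then 1 else 0) - w i * g ^ 2 / (m - α)) 0 := by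
    have a1 : HasDerivAt (fun t : ℝ => w i + t * (if i = j then 1 else 0))
        (if i = j then 1 else 0) 0 := by
      simpa using ((hasDerivAt_id (0 : ℝ)).mul_const (if i = j then (1 : ℝ) else 0)).const_add (w i)
    have a2 : HasDerivAt (fun t : ℝ => 1 + t * (m : ℝ)) m 0 := by
      simpa using ((hasDerivAt_id (0 : ℝ)).mul_const (m : ℝ)).const_add 1
    have a3 := (((((hasDerivAt_id (0 : ℝ)).div a2 (by simp)).mul_const (g ^ 2)).const_sub
      (m : ℝ)).sub_const α)
    have a4 := (a1.mul a3).div_const (m - α)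
    refine a4.congr_deriv ?_
    by_cases hij : i = j
    · simp [hij]
      field_simp
      ring
    · simp [hij]
      field_simp
  have hev : (fun t : ℝ => Talg x α (w + t • (Pi.single j 1 : Fin n → ℝ)) i) =ᶠ[nhds 0]
      (fun t : ℝ => (w i + t * (if i = j then 1 else 0)) *
      (m - t / (1 + t * m) * g ^ 2 - α) / (m - α)) := by
    have hc : ContinuousAt (fun t : ℝ => 1 + t * (m : ℝ)) 0 := by fun_prop
    have := hc.eventually_ne (y := 0) (by simp)
    filter_upwards [this] with t ht
    have hM : Mmat x (w + t • (Pi.single j 1 : Fin n → ℝ)) =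
        Mmat x w + t • Matrix.vecMulVec (x j) (x j) := by
      simp only [Mmat, Pi.add_apply, add_smul, Finset.sum_add_distrib]
      congr 1
      rw [Finset.sum_eq_single j]
      · simp
      · intro b _ hb
        simp [hb]
      · simp
    simp only [Talg]
    rw [hM, aux_sm hunit hK _ _ _ (by rw [hd]; exact ht), hd, hd, ← hg]
    simp [Pi.single_apply]
  have h4 := h2.unique (h3.congr_of_eventuallyEq hev)
  rw [← h4]
  simp

/-- Eigenvalue bounds for the matrix rate: if `0 ≤ α < m`, the design matrix has full rank
`m ≥ 2`, and `w*` is an interior global maximizer of `det M` over the closed simplex, then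
the matrix rate `R(α)` (the Jacobian of `T_α` at `w*`) is diagonalizable and all its
eigenvalues lie in `[−α/(m−α), 1]`. -/
theorem stmt_4 {n m : ℕ} (hm : 2 ≤ m) (hnm : m ≤ n)
    (x : Fin n → Fin m → ℝ) (hrank : (Matrix.of x).rank = m)
    (α : ℝ) (hα0 : 0 ≤ α) (hαm : α < m)
    (wstar : Fin n → ℝ) (hpos : ∀ i, 0 < wstar i) (hsum : ∑ i, wstar i = 1)
    (hopt : ∀ v : Fin n → ℝ, (∀ i, 0 ≤ v i) → ∑ i, v i = 1 →
      (Mmat x v).det ≤ (Mmat x wstar).det)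
    (R : Matrix (Fin n) (Fin n) ℝ)
    (hR : HasFDerivAt (Talg x α)
      (LinearMap.toContinuousLinearMap (Matrix.toLin' R)) wstar) :
    ∃ P D : Matrix (Fin n) (Fin n) ℝ, IsUnit P.det ∧ D.IsDiag ∧
      R = P * D * P⁻¹ ∧
      ∀ i, D i i ∈ Set.Icc (-(α / ((m : ℝ) - α))) 1 := by
  have hP := aux_posDef x hrank wstar hpos
  have hd := aux_d_eq hm x wstar hpos hsum hopt hP
  have hRe := aux_R x α hαm wstar hP hd R hR
  have hunit : IsUnit (Mmat x wstar).det := hP.det_pos.ne'.isUnit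
  have hK : ((Mmat x wstar)⁻¹)ᵀ = (Mmat x wstar)⁻¹ := by
    have h := hP.inv.isHermitian.eq
    rwa [Matrix.conjTranspose_eq_transpose_of_trivial] at h
  have hrow := aux_row x wstar hunit hK
  have hma : 0 < (m : ℝ) - α := by linarith
  -- Gram matrix
  have hG0 : (Matrix.of fun i j => x i ⬝ᵥ (Mmat x wstar)⁻¹ *ᵥ x j).PosSemidef := by
    have h := hP.inv.posSemidef.mul_mul_conjTranspose_same (Matrix.of x)
    have e : (Matrix.of fun i j => x i ⬝ᵥ (Mmat x wstar)⁻¹ *ᵥ x j) =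
        Matrix.of x * (Mmat x wstar)⁻¹ * (Matrix.of x)ᴴ := ?_
    · rw [e]; exact h
    ext i j
    rw [Matrix.mul_assoc, Matrix.mul_apply]
    simp [dotProduct, Matrix.mulVec, Matrix.mul_apply]
  have hG := hG0.hadamard hG0
  have gs : ∀ i j, x i ⬝ᵥ (Mmat x wstar)⁻¹ *ᵥ x j = x j ⬝ᵥ (Mmat x wstar)⁻¹ *ᵥ x i :=
    fun i j => aux_symm hK _ _
  set g : Fin n → Fin n → ℝ := fun i j => x i ⬝ᵥ (Mmat x wstar)⁻¹ *ᵥ x j with hgdef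
  change ∀ i j, g i j = g j i at gs
  change ∀ i, ∑ j, wstar j * g i j ^ 2 = g i i at hrow
  change ∀ i, g i i = m at hd
  change ∀ i j, R i j = (if i = j then 1 else 0) - wstar i * g i j ^ 2 / (m - α) at hRe
  have hQ0 : ∀ u : Fin n → ℝ, 0 ≤ ∑ i, ∑ j, u i * u j * g i j ^ 2 := by
    intro u
    have := hG.dotProduct_mulVec_nonneg u
    refine this.trans (le_of_eq ?_)
    simp only [dotProduct, Matrix.mulVec, Matrix.hadamard_apply, Matrix.of_apply, star_trivial,
      Finset.mul_sum]
    refine Finset.sum_congr rfl fun i _ => Finset.sum_congr rfl fun j _ => ?_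
    change u i * (g i j * g i j * u j) = _
    ring
  have hQ1 : ∀ a : Fin n → ℝ,
      ∑ i, ∑ j, (wstar i * a i) * (wstar j * a j) * g i j ^ 2 ≤ m * ∑ i, wstar i * a i ^ 2 := by
    intro a
    have b1 : ∑ i, ∑ j, wstar i * wstar j * g i j ^ 2 * a i ^ 2 = m * ∑ i, wstar i * a i ^ 2 := by
      rw [Finset.mul_sum]
      refine Finset.sum_congr rfl fun i _ => ?_
      rw [← hd i, ← hrow i, Finset.sum_mul]
      exact Finset.sum_congr rfl fun j _ => by ring
    have b2 : ∑ i, ∑ j, wstar i * wstar j * g i j ^ 2 * a j ^ 2 = m * ∑ i, wstar i * a i ^ 2 := by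
      rw [Finset.sum_comm, ← b1]
      refine Finset.sum_congr rfl fun i _ => Finset.sum_congr rfl fun j _ => ?_
      rw [gs j i]; ring
    have b3 : ∑ i, ∑ j, (wstar i * a i) * (wstar j * a j) * g i j ^ 2 ≤
        ∑ i, ∑ j, (wstar i * wstar j * g i j ^ 2 * a i ^ 2 +
          wstar i * wstar j * g i j ^ 2 * a j ^ 2) / 2 := by
      refine Finset.sum_le_sum fun i _ => Finset.sum_le_sum fun j _ => ?_
      have hc : 0 ≤ wstar i * wstar j * g i j ^ 2 :=
        mul_nonneg (mul_nonneg (hpos i).le (hpos j).le) (sq_nonneg _)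
      nlinarith [mul_nonneg hc (sq_nonneg (a i - a j))]
    refine b3.trans (le_of_eq ?_)
    simp_rw [← Finset.sum_div, Finset.sum_add_distrib]
    rw [b1, b2]
    ring
  -- symmetrised matrix
  set r : Fin n → ℝ := fun i => Real.sqrt (wstar i) with hr
  have hr0 : ∀ i, 0 < r i := fun i => Real.sqrt_pos.mpr (hpos i)
  have hrr : ∀ i, r i * r i = wstar i := fun i => Real.mul_self_sqrt (hpos i).le
  let S : Matrix (Fin n) (Fin n) ℝ := Matrix.of fun i j =>
    (if i = j then 1 else 0) - r i * r j * g i j ^ 2 / (m - α)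
  have hS : S.IsHermitian := by
    ext i j
    simp only [Matrix.conjTranspose_apply, star_trivial, S, Matrix.of_apply]
    rw [gs j i, mul_comm (r j) (r i)]
    simp only [eq_comm]
  have hquad : ∀ z : Fin n → ℝ, z ⬝ᵥ S *ᵥ z =
      ∑ i, z i ^ 2 - (∑ i, ∑ j, (r i * z i) * (r j * z j) * g i j ^ 2) / (m - α) := by
    intro z
    simp only [dotProduct, Matrix.mulVec, S, Matrix.of_apply, sub_mul, Finset.sum_sub_distrib,
      mul_sub, Finset.mul_sum, Finset.sum_div]
    congr 1
    · refine Finset.sum_congr rfl fun i _ => ?_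
      simp [sq]
    · refine Finset.sum_congr rfl fun i _ => Finset.sum_congr rfl fun j _ => by ring
  have heig : ∀ i, hS.eigenvalues i ∈ Set.Icc (-(α / ((m : ℝ) - α))) 1 := by
    intro i
    have he := hS.eigenvalues_eq i
    have hn : ∑ k, (hS.eigenvectorBasis i) k ^ 2 = 1 := by
      have := hS.eigenvectorBasis.orthonormal.1 i
      rw [EuclideanSpace.norm_eq, Real.sqrt_eq_one] at this
      simpa using this
    set z : Fin n → ℝ := fun k => (hS.eigenvectorBasis i) k with hz
    have he' : hS.eigenvalues i = z ⬝ᵥ S *ᵥ z := by simpa using he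
    rw [he', hquad, hn]
    have q0 := hQ0 (fun k => r k * z k)
    have q1 := hQ1 (fun k => z k / r k)
    have e1 : ∀ k, wstar k * (z k / r k) = r k * z k := fun k => by
      rw [← hrr k]; have := (hr0 k).ne'; field_simp
    have e2 : ∀ k, wstar k * (z k / r k) ^ 2 = z k ^ 2 := fun k => by
      rw [← hrr k]; have := (hr0 k).ne'; field_simp
    simp_rw [e1, e2] at q1
    rw [hn, mul_one] at q1
    constructor
    · have e3 : -(α / ((m : ℝ) - α)) = 1 - m / (m - α) := by field_simp; ring
      rw [e3]
      gcongr
    · have := div_nonneg q0 hma.le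
      linarith
  have hD : IsUnit (Matrix.diagonal r).det := by
    rw [Matrix.det_diagonal]
    exact (Finset.prod_pos fun i _ => hr0 i).ne'.isUnit
  set U : Matrix (Fin n) (Fin n) ℝ := (hS.eigenvectorUnitary : Matrix (Fin n) (Fin n) ℝ) with hU
  have hUU : U * star U = 1 := Unitary.coe_mul_star_self hS.eigenvectorUnitary
  have hUinv : U⁻¹ = star U := Matrix.inv_eq_right_inv hUU
  have hUdet : IsUnit U.det := by
    have := congrArg Matrix.det hUU
    rw [Matrix.det_mul, Matrix.det_one] at this
    exact IsUnit.of_mul_eq_one _ this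
  have hspec : S = U * Matrix.diagonal hS.eigenvalues * U⁻¹ := by
    have := hS.spectral_theorem
    rw [Unitary.conjStarAlgAut_apply] at this
    rw [hUinv]
    exact this
  refine ⟨Matrix.diagonal r * U, Matrix.diagonal hS.eigenvalues, ?_, Matrix.isDiag_diagonal _, ?_,
    ?_⟩
  · rw [Matrix.det_mul]
    exact hD.mul hUdet
  · have hRS : R * Matrix.diagonal r = Matrix.diagonal r * S := by
      ext i j
      rw [Matrix.mul_diagonal, Matrix.diagonal_mul, hRe]
      simp only [S, Matrix.of_apply]
      rw [← hrr i]
      by_cases hij : i = j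
      · subst hij; simp; ring
      · simp [hij]; ring
    rw [Matrix.mul_inv_rev]
    calc R = R * Matrix.diagonal r * (Matrix.diagonal r)⁻¹ := by
          rw [Matrix.mul_assoc, Matrix.mul_nonsing_inv _ hD, Matrix.mul_one]
      _ = _ := by
          rw [hRS]
          conv_lhs => rw [hspec]
          simp only [Matrix.mul_assoc]
  · intro i
    rw [Matrix.diagonal_apply_eq]
    exact heig i
end
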